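/- Let j₀ ∈ ℚ. Suppose there exists R such that every elliptic curve E over ℚ with j-invariant equal to j₀ satisfies rank E(ℚ) ≤ R. Then there exists an integer N₀, depending only on j₀, such that for every elliptic curve E over ℚ with j-invariant equal to j₀, every sequence of affine points of E(ℚ) whose x-coordinates form a non-trivial arithmetic progression, or whose y-coordinates form a non-trivial arithmetic progression, has length at most N₀. -/

import Mathlib

open scoped TensorProduct

/-- The rank of an abelian group `G`, i.e. `dim_ℚ (G ⊗_ℤ ℚ)`. -/
noncomputable def grpRank (G : Type*) [AddCommGroup G] : ℕ :=
  Module.finrank ℚ (ℚ ⊗[ℤ] G)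

/-- `u 0, …, u (N-1)` is a non-trivial arithmetic progression. -/
def IsNontrivAP {F : Type*} [Field F] {N : ℕ} (u : Fin N → F) : Prop :=
  ∃ a b : F, b ≠ 0 ∧ ∀ i : Fin N, u i = a + (((i : ℕ) + 1 : ℕ) : F) * b

/-!
Write a curve in short form `Y² = X³ + AX + B` with discriminant `Δ` and set
`h(P) = h(X(P)⁶ / Δ) / 6`, with `h` the logarithmic Weil height. This is invariant under twisting:
over an extension in which `Δ` is a twelfth power, rescaling to `Δ = 1` bounds `A` and `B` at every
place in terms of `j` alone. Hence `h` satisfies the parallelogram law with an error depending only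
on `j`, and the number of points with `h(P) ≤ c` is bounded independently of the curve.

The points of a progression of length `N` satisfy `uY + vX + w = i` with `1 ≤ i ≤ N`, so that four
points `(X, Y, i)` are coplanar. This determines `P` from any three non-collinear points, and
equally from the differences `Q - P` of three other points with `P`, at the cost of their heights
and of `log N`. Let `H` be the fourth smallest height of the points. By the first fact all heights
are `O(H + log N)`; if `N` is large in terms of the rank, then by packing in Mordell–Weil space some
five points of height at least `H` have differences of height at most `(H + log N) / 1000`, up to
constants, and by the second fact `H = O(log N)`. So all points lie in a ball of radius
`O(√(log N))`, which contains only `O((log N) ^ R)` points, and `N` is bounded.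

The rank is finite by the Mordell–Weil theorem, obtained from the same height by a 2-descent.
-/

namespace ArithProgression

/-! ### Short Weierstrass coordinates -/

section ShortCoordinates

open WeierstrassCurve.Affine

variable {F : Type*} [Field F]

/-- The coefficient `A` of the short Weierstrass model `Y² = X³ + AX + B` of `W`. -/
def shortA (W : WeierstrassCurve F) : F := -W.c₄ / 48

/-- The coefficient `B` of the short Weierstrass model `Y² = X³ + AX + B` of `W`. -/
def shortB (W : WeierstrassCurve F) : F := -W.c₆ / 864

/-- The `X`-coordinate of a point in the short Weierstrass model, with value `0` at infinity. -/
def shortX {W : WeierstrassCurve F} : W.toAffine.Point → F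
  | .zero => 0
  | .some x _ _ => x + W.b₂ / 12

/-- The `Y`-coordinate of a point in the short Weierstrass model, with value `0` at infinity. -/
def shortY {W : WeierstrassCurve F} : W.toAffine.Point → F
  | .zero => 0
  | .some x y _ => y + (W.a₁ * x + W.a₃) / 2

lemma shortA_map {L : Type*} [Field L] (W : WeierstrassCurve F) (f : F →+* L) :
    shortA (W.map f) = f (shortA W) := by
  rw [shortA, shortA, map_div₀, map_neg, WeierstrassCurve.map_c₄, map_ofNat]

lemma shortB_map {L : Type*} [Field L] (W : WeierstrassCurve F) (f : F →+* L) :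
    shortB (W.map f) = f (shortB W) := by
  rw [shortB, shortB, map_div₀, map_neg, WeierstrassCurve.map_c₆, map_ofNat]

variable {W : WeierstrassCurve F} {P Q : W.toAffine.Point}

@[simp]
lemma shortX_zero : shortX (0 : W.toAffine.Point) = 0 := rfl

lemma exists_eq_some_of_ne_zero (hP : P ≠ 0) :
    ∃ x y, ∃ h : W.toAffine.Nonsingular x y, P = .some x y h := by
  rcases P with _ | ⟨x, y, h⟩
  · exact absurd rfl hP
  · exact ⟨x, y, h, rfl⟩

@[simp]
lemma shortX_neg (P : W.toAffine.Point) : shortX (-P) = shortX P := by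
  rcases P with _ | ⟨x, y, h⟩
  · rfl
  · rw [Point.neg_some]; rfl

lemma ext_short (hP : P ≠ 0) (hQ : Q ≠ 0) (hX : shortX P = shortX Q)
    (hY : shortY P = shortY Q) : P = Q := by
  obtain ⟨x, y, h, rfl⟩ := exists_eq_some_of_ne_zero hP
  obtain ⟨x', y', h', rfl⟩ := exists_eq_some_of_ne_zero hQ
  obtain rfl : x = x' := add_right_cancel hX
  obtain rfl : y = y' := add_right_cancel hY
  rfl

lemma add_ne_zero_of_shortX_ne [DecidableEq F] (hX : shortX P ≠ shortX Q) : P + Q ≠ 0 := by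
  intro h
  rw [eq_neg_of_add_eq_zero_left h, shortX_neg] at hX
  exact hX rfl

variable [CharZero F]

lemma Δ_eq_shortA_shortB (W : WeierstrassCurve F) :
    W.Δ = -16 * (4 * shortA W ^ 3 + 27 * shortB W ^ 2) := by
  simp only [shortA, shortB, WeierstrassCurve.c₄, WeierstrassCurve.c₆, WeierstrassCurve.Δ,
    WeierstrassCurve.b₂, WeierstrassCurve.b₄, WeierstrassCurve.b₆, WeierstrassCurve.b₈]
  ring

lemma shortY_sq (hP : P ≠ 0) :
    shortY P ^ 2 = shortX P ^ 3 + shortA W * shortX P + shortB W := by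
  obtain ⟨x, y, h, rfl⟩ := exists_eq_some_of_ne_zero hP
  have heq := (equation_iff ..).mp h.1
  simp only [shortX, shortY, shortA, shortB, WeierstrassCurve.c₄, WeierstrassCurve.c₆,
    WeierstrassCurve.b₂, WeierstrassCurve.b₄, WeierstrassCurve.b₆]
  linear_combination heq

@[simp]
lemma shortY_neg (P : W.toAffine.Point) : shortY (-P) = -shortY P := by
  rcases P with _ | ⟨x, y, h⟩
  · exact neg_zero.symm
  · rw [Point.neg_some]
    simp only [shortY, negY]
    ring

lemma eq_or_eq_neg_of_shortX_eq (hP : P ≠ 0) (hQ : Q ≠ 0) (hX : shortX P = shortX Q) :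
    P = Q ∨ P = -Q := by
  classical
  have hsq : shortY P ^ 2 = shortY Q ^ 2 := by rw [shortY_sq hP, shortY_sq hQ, hX]
  rcases sq_eq_sq_iff_eq_or_eq_neg.mp hsq with hY | hY
  · exact Or.inl (ext_short hP hQ hX hY)
  · exact Or.inr (ext_short hP (neg_ne_zero.mpr hQ) (by rw [shortX_neg, hX])
      (by rw [shortY_neg, hY]))

lemma exists_short_eq [W.IsElliptic] {X Y : F} (h : Y ^ 2 = X ^ 3 + shortA W * X + shortB W) :
    ∃ P : W.toAffine.Point, P ≠ 0 ∧ shortX P = X ∧ shortY P = Y := by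
  have heq : W.toAffine.Equation (X - W.b₂ / 12)
      (Y - (W.a₁ * (X - W.b₂ / 12) + W.a₃) / 2) := by
    rw [equation_iff]
    simp only [shortA, shortB, WeierstrassCurve.c₄, WeierstrassCurve.c₆,
      WeierstrassCurve.b₂, WeierstrassCurve.b₄, WeierstrassCurve.b₆] at h ⊢
    linear_combination h
  exact ⟨.some _ _ (equation_iff_nonsingular.mp heq), Point.some_ne_zero _, by simp [shortX],
    by simp [shortY]⟩

lemma ne_negY_of_shortY_ne_zero {x y : F} {h : W.toAffine.Nonsingular x y}
    (hY : shortY (.some x y h) ≠ 0) : y ≠ W.toAffine.negY x y := by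
  intro e
  apply hY
  rw [negY] at e
  simp only [shortY]
  linear_combination (1 / 2 : F) * e

variable [DecidableEq F]

lemma shortX_add (hP : P ≠ 0) (hQ : Q ≠ 0) (hX : shortX P ≠ shortX Q) :
    shortX (P + Q) =
      ((shortY P - shortY Q) / (shortX P - shortX Q)) ^ 2 - shortX P - shortX Q := by
  obtain ⟨x, y, h, rfl⟩ := exists_eq_some_of_ne_zero hP
  obtain ⟨x', y', h', rfl⟩ := exists_eq_some_of_ne_zero hQ
  have hne : x ≠ x' := fun hx ↦ hX (by subst hx; rfl)
  have hsub : x - x' ≠ 0 := sub_ne_zero.mpr hne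
  rw [Point.add_of_X_ne hne]
  simp only [shortX, shortY, addX, slope_of_X_ne hne, add_sub_add_right_eq_sub,
    WeierstrassCurve.b₂]
  field_simp
  ring

lemma shortY_add (hP : P ≠ 0) (hQ : Q ≠ 0) (hX : shortX P ≠ shortX Q) :
    shortY (P + Q) = -((shortY P - shortY Q) / (shortX P - shortX Q) *
      (shortX (P + Q) - shortX P) + shortY P) := by
  obtain ⟨x, y, h, rfl⟩ := exists_eq_some_of_ne_zero hP
  obtain ⟨x', y', h', rfl⟩ := exists_eq_some_of_ne_zero hQ
  have hne : x ≠ x' := fun hx ↦ hX (by subst hx; rfl)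
  have hsub : x - x' ≠ 0 := sub_ne_zero.mpr hne
  rw [Point.add_of_X_ne hne]
  simp only [shortX, shortY, addX, addY, negAddY, negY, slope_of_X_ne hne,
    add_sub_add_right_eq_sub, WeierstrassCurve.b₂]
  field_simp
  ring

lemma add_self_eq_zero_of_shortY_eq_zero (hY : shortY P = 0) : P + P = 0 := by
  by_cases hP : P = 0
  · simp [hP]
  have hneg : P = -P :=
    ext_short hP (neg_ne_zero.mpr hP) (shortX_neg P).symm (by rw [shortY_neg, hY, neg_zero])
  exact add_eq_zero_iff_eq_neg.mpr hneg

lemma slope_self_eq {x y : F} {h : W.toAffine.Nonsingular x y}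
    (hY : shortY (.some x y h) ≠ 0) :
    W.toAffine.slope x x y y =
      (3 * shortX (.some x y h) ^ 2 + shortA W) / (2 * shortY (.some x y h)) - W.a₁ / 2 := by
  have hden : y - W.toAffine.negY x y = 2 * shortY (.some x y h) := by
    simp only [shortY, negY]; ring
  rw [slope_of_Y_ne rfl (ne_negY_of_shortY_ne_zero hY), hden, eq_sub_iff_add_eq,
    div_add' _ _ _ (mul_ne_zero two_ne_zero hY), div_left_inj' (mul_ne_zero two_ne_zero hY)]
  simp only [shortX, shortY, shortA, WeierstrassCurve.c₄, WeierstrassCurve.b₂,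
    WeierstrassCurve.b₄]
  ring

lemma add_self_ne_zero_of_shortY_ne_zero (hP : P ≠ 0) (hY : shortY P ≠ 0) : P + P ≠ 0 := by
  obtain ⟨x, y, h, rfl⟩ := exists_eq_some_of_ne_zero hP
  rw [Point.add_self_of_Y_ne (ne_negY_of_shortY_ne_zero hY)]
  exact Point.some_ne_zero _

lemma shortX_add_self (hP : P ≠ 0) (hY : shortY P ≠ 0) :
    shortX (P + P) = ((3 * shortX P ^ 2 + shortA W) / (2 * shortY P)) ^ 2 - 2 * shortX P := by
  obtain ⟨x, y, h, rfl⟩ := exists_eq_some_of_ne_zero hP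
  rw [Point.add_self_of_Y_ne (ne_negY_of_shortY_ne_zero hY)]
  have hslope := slope_self_eq hY
  generalize (3 * shortX (.some x y h) ^ 2 + shortA W) / (2 * shortY (.some x y h)) = s
    at hslope ⊢
  simp only [shortX, addX, hslope, WeierstrassCurve.b₂]
  ring

lemma shortY_add_self (hP : P ≠ 0) (hY : shortY P ≠ 0) :
    shortY (P + P) = -((3 * shortX P ^ 2 + shortA W) / (2 * shortY P) *
      (shortX (P + P) - shortX P) + shortY P) := by
  obtain ⟨x, y, h, rfl⟩ := exists_eq_some_of_ne_zero hP
  rw [Point.add_self_of_Y_ne (ne_negY_of_shortY_ne_zero hY)]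
  have hslope := slope_self_eq hY
  generalize (3 * shortX (.some x y h) ^ 2 + shortA W) / (2 * shortY (.some x y h)) = s
    at hslope ⊢
  simp only [shortX, shortY, addX, addY, negAddY, negY, hslope, WeierstrassCurve.b₂]
  ring

lemma shortX_add_self_mul (hP : P ≠ 0) (hY : shortY P ≠ 0) :
    shortX (P + P) * (4 * (shortX P ^ 3 + shortA W * shortX P + shortB W)) =
      shortX P ^ 4 - 2 * shortA W * shortX P ^ 2 - 8 * shortB W * shortX P + shortA W ^ 2 := by
  rw [shortX_add_self hP hY, ← shortY_sq hP]
  field_simp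
  linear_combination -32 * shortX P * shortY_sq hP

lemma shortX_sub (hP : P ≠ 0) (hQ : Q ≠ 0) (hX : shortX P ≠ shortX Q) :
    shortX (P - Q) =
      ((shortY P + shortY Q) / (shortX P - shortX Q)) ^ 2 - shortX P - shortX Q := by
  rw [sub_eq_add_neg, shortX_add hP (neg_ne_zero.mpr hQ) (by rwa [shortX_neg]), shortX_neg,
    shortY_neg, sub_neg_eq_add]

lemma shortX_add_add_shortX_sub_mul (hP : P ≠ 0) (hQ : Q ≠ 0) (hX : shortX P ≠ shortX Q) :
    (shortX (P + Q) + shortX (P - Q)) * (shortX P - shortX Q) ^ 2 =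
      2 * (shortX P * shortX Q + shortA W) * (shortX P + shortX Q) + 4 * shortB W := by
  have hsub : shortX P - shortX Q ≠ 0 := sub_ne_zero.mpr hX
  rw [shortX_add hP hQ hX, shortX_sub hP hQ hX]
  field_simp
  linear_combination 2 * shortY_sq hP + 2 * shortY_sq hQ

lemma shortX_add_mul_shortX_sub_mul (hP : P ≠ 0) (hQ : Q ≠ 0) (hX : shortX P ≠ shortX Q) :
    shortX (P + Q) * shortX (P - Q) * (shortX P - shortX Q) ^ 2 =
      (shortX P * shortX Q - shortA W) ^ 2 - 4 * shortB W * (shortX P + shortX Q) := by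
  have hsub : shortX P - shortX Q ≠ 0 := sub_ne_zero.mpr hX
  have hdiff : shortY P ^ 2 - shortY Q ^ 2 = (shortX P - shortX Q) *
      (shortX P ^ 2 + shortX P * shortX Q + shortX Q ^ 2 + shortA W) := by
    linear_combination shortY_sq hP - shortY_sq hQ
  rw [shortX_add hP hQ hX, shortX_sub hP hQ hX]
  field_simp
  linear_combination (shortY P ^ 2 - shortY Q ^ 2 + (shortX P - shortX Q) *
      (shortX P ^ 2 + shortX P * shortX Q + shortX Q ^ 2 + shortA W)) * hdiff -
    2 * (shortX P + shortX Q) * (shortX P - shortX Q) ^ 2 * (shortY_sq hP + shortY_sq hQ)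

end ShortCoordinates

/-! ### Canonical heights on abelian groups -/

section CanonicalHeight

open Filter Topology

variable {G : Type*} [AddCommGroup G] {h : G → ℝ} {C : ℝ}

/-- `h` satisfies the parallelogram law up to an error of at most `C`. -/
def IsAlmostQuadratic (h : G → ℝ) (C : ℝ) : Prop :=
  ∀ x y, |h (x + y) + h (x - y) - 2 * (h x + h y)| ≤ C

/-- Tate's canonical height `lim 4⁻ⁿ h (2ⁿ x)` attached to an almost quadratic function `h`. -/
noncomputable def canonicalHeight (h : G → ℝ) (x : G) : ℝ :=
  limUnder atTop fun n : ℕ ↦ h (2 ^ n • x) / 4 ^ n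

namespace IsAlmostQuadratic

lemma bound_nonneg (hh : IsAlmostQuadratic h C) : 0 ≤ C :=
  (abs_nonneg _).trans (hh 0 0)

lemma abs_apply_add_self_sub_le (hh : IsAlmostQuadratic h C) (x : G) :
    |h (x + x) - 4 * h x| ≤ 3 * C / 2 := by
  have hxx := hh x x
  have h00 := hh 0 0
  simp only [sub_self, add_zero] at hxx h00
  rw [abs_le] at hxx h00 ⊢
  constructor <;> linarith

lemma dist_tateSeq_succ_le (hh : IsAlmostQuadratic h C) (x : G) (n : ℕ) :
    dist (h (2 ^ n • x) / 4 ^ n) (h (2 ^ (n + 1) • x) / 4 ^ (n + 1)) ≤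
      3 * C / 8 * (1 / 4) ^ n := by
  have hdouble : 2 ^ (n + 1) • x = 2 ^ n • x + 2 ^ n • x := by rw [pow_succ, mul_two, add_smul]
  have hdiff : h (2 ^ (n + 1) • x) / 4 ^ (n + 1) - h (2 ^ n • x) / 4 ^ n =
      (h (2 ^ n • x + 2 ^ n • x) - 4 * h (2 ^ n • x)) / 4 ^ (n + 1) := by
    rw [hdouble, pow_succ]; field_simp
  calc dist (h (2 ^ n • x) / 4 ^ n) (h (2 ^ (n + 1) • x) / 4 ^ (n + 1))
      = |h (2 ^ n • x + 2 ^ n • x) - 4 * h (2 ^ n • x)| / 4 ^ (n + 1) := by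
        rw [dist_comm, Real.dist_eq, hdiff, abs_div, abs_pow, Nat.abs_ofNat]
    _ ≤ 3 * C / 2 / 4 ^ (n + 1) := by gcongr; exact hh.abs_apply_add_self_sub_le _
    _ = 3 * C / 8 * (1 / 4) ^ n := by rw [pow_succ, one_div_pow]; ring

lemma tendsto_canonicalHeight (hh : IsAlmostQuadratic h C) (x : G) :
    Tendsto (fun n : ℕ ↦ h (2 ^ n • x) / 4 ^ n) atTop (𝓝 (canonicalHeight h x)) :=
  (cauchySeq_of_le_geometric (1 / 4) (3 * C / 8) (by norm_num)
    (hh.dist_tateSeq_succ_le x)).tendsto_limUnder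

lemma canonicalHeight_parallelogram (hh : IsAlmostQuadratic h C) (x y : G) :
    canonicalHeight h (x + y) + canonicalHeight h (x - y) =
      2 * (canonicalHeight h x + canonicalHeight h y) := by
  let t (z : G) (n : ℕ) : ℝ := h (2 ^ n • z) / 4 ^ n
  have hlim : Tendsto (fun n ↦ t (x + y) n + t (x - y) n - 2 * (t x n + t y n)) atTop
      (𝓝 (canonicalHeight h (x + y) + canonicalHeight h (x - y) -
        2 * (canonicalHeight h x + canonicalHeight h y))) :=
    ((hh.tendsto_canonicalHeight _).add (hh.tendsto_canonicalHeight _)).sub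
      (((hh.tendsto_canonicalHeight _).add (hh.tendsto_canonicalHeight _)).const_mul 2)
  have hzero : Tendsto (fun n ↦ t (x + y) n + t (x - y) n - 2 * (t x n + t y n)) atTop (𝓝 0) := by
    have hgeom : Tendsto (fun n : ℕ ↦ C * (1 / 4) ^ n) atTop (𝓝 0) := by
      simpa using (tendsto_pow_atTop_nhds_zero_of_lt_one (r := (1 / 4 : ℝ)) (by norm_num)
        (by norm_num)).const_mul C
    refine squeeze_zero_norm (fun n ↦ ?_) hgeom
    have hn := hh (2 ^ n • x) (2 ^ n • y)
    rw [← smul_add, ← smul_sub] at hn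
    calc |t (x + y) n + t (x - y) n - 2 * (t x n + t y n)|
        = |h (2 ^ n • (x + y)) + h (2 ^ n • (x - y)) -
            2 * (h (2 ^ n • x) + h (2 ^ n • y))| / 4 ^ n := by
          rw [← Nat.abs_ofNat (R := ℝ) 4, ← abs_pow, ← abs_div]
          simp only [t]
          congr 1
          ring
      _ ≤ C / 4 ^ n := by gcongr
      _ = C * (1 / 4) ^ n := by rw [one_div_pow]; ring
  exact sub_eq_zero.mp (tendsto_nhds_unique hlim hzero)

lemma abs_canonicalHeight_sub_le (hh : IsAlmostQuadratic h C) (x : G) :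
    |canonicalHeight h x - h x| ≤ C := by
  have hdist := dist_le_of_le_geometric_of_tendsto₀ (1 / 4) (3 * C / 8) (by norm_num)
    (hh.dist_tateSeq_succ_le x) (hh.tendsto_canonicalHeight x)
  simp only [pow_zero, one_smul, div_one] at hdist
  rw [dist_comm, Real.dist_eq] at hdist
  calc |canonicalHeight h x - h x| ≤ 3 * C / 8 / (1 - 1 / 4) := hdist
    _ = C / 2 := by ring
    _ ≤ C := half_le_self hh.bound_nonneg

lemma canonicalHeight_nonneg (hh : IsAlmostQuadratic h C) (hpos : ∀ x, 0 ≤ h x) (x : G) :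
    0 ≤ canonicalHeight h x :=
  ge_of_tendsto' (hh.tendsto_canonicalHeight x) fun _ ↦ div_nonneg (hpos _) (by positivity)

end IsAlmostQuadratic

end CanonicalHeight

section EuclideanEmbedding

open Matrix

variable {G : Type*} [AddCommGroup G] {q : G → ℝ}

lemma polar_add_right_of_parallelogram (hq : ∀ x y, q (x + y) + q (x - y) = 2 * (q x + q y))
    (x y z : G) :
    QuadraticMap.polar q x (y + z) = QuadraticMap.polar q x y + QuadraticMap.polar q x z := by
  have h₁ := hq (x + y) z
  have h₂ := hq x (y - z)
  have h₃ := hq (x + z) y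
  have h₄ := hq y z
  rw [show x + y + z = x + (y + z) by abel] at h₁
  rw [show x + (y - z) = x + y - z by abel, show x - (y - z) = x + z - y by abel] at h₂
  rw [show x + z + y = x + (y + z) by abel] at h₃
  simp only [QuadraticMap.polar]
  linarith

lemma polar_self_of_parallelogram (hq : ∀ x y, q (x + y) + q (x - y) = 2 * (q x + q y))
    (x : G) : QuadraticMap.polar q x x = 2 * q x := by
  have h₀ := hq 0 0
  have hx := hq x x
  rw [add_zero, sub_zero] at h₀
  rw [sub_self] at hx
  rw [QuadraticMap.polar]
  linarith

lemma exists_basis_one_tmul (G : Type*) [AddCommGroup G] [FiniteDimensional ℚ (ℚ ⊗[ℤ] G)] :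
    ∃ (s : Fin (grpRank G) → G) (b : Module.Basis (Fin (grpRank G)) ℚ (ℚ ⊗[ℤ] G)),
      ∀ i, b i = 1 ⊗ₜ s i := by
  have hspan : Submodule.span ℚ (Set.range fun g : G ↦ (1 : ℚ) ⊗ₜ[ℤ] g) = ⊤ := by
    have := Submodule.baseChange_span (A := ℚ) (Set.univ : Set G) (R := ℤ)
    rw [Submodule.span_univ, Submodule.baseChange_top, Set.image_univ] at this
    exact this.symm
  let b := Module.Basis.ofSpan hspan.ge
  have := FiniteDimensional.fintypeBasisIndex b
  let e := Fintype.equivFinOfCardEq (Module.finrank_eq_card_basis b).symm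
  have hmem (i) : ∃ g : G, b.reindex e i = 1 ⊗ₜ g := by
    obtain ⟨g, hg⟩ := Module.Basis.ofSpan_subset hspan.ge (Set.mem_range_self (e.symm i))
    exact ⟨g, by rw [b.reindex_apply]; exact hg.symm⟩
  choose s hs using hmem
  exact ⟨s, b.reindex e, hs⟩

lemma exists_rational_coordinates (G : Type*) [AddCommGroup G]
    [FiniteDimensional ℚ (ℚ ⊗[ℤ] G)] :
    ∃ (s : Fin (grpRank G) → G) (c : G →+ (Fin (grpRank G) → ℚ)),
      (∀ v : Fin (grpRank G) → ℤ, c (∑ i, v i • s i) = fun i ↦ (v i : ℚ)) ∧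
      ∀ (f : G →+ ℝ) (g : G), f g = ∑ i, (c g i : ℝ) * f (s i) := by
  obtain ⟨s, b, hb⟩ := exists_basis_one_tmul G
  let c : G →+ (Fin (grpRank G) → ℚ) :=
    (b.equivFun : _ →+ _).comp (TensorProduct.mk ℤ ℚ G 1).toAddMonoidHom
  refine ⟨s, c, fun v ↦ ?_, fun f g ↦ ?_⟩
  · have hv : (1 : ℚ) ⊗ₜ[ℤ] (∑ i, v i • s i) = ∑ i, (v i : ℚ) • b i := by
      rw [TensorProduct.tmul_sum]
      refine Finset.sum_congr rfl fun i _ ↦ ?_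
      rw [hb, TensorProduct.tmul_smul, Int.cast_smul_eq_zsmul]
    change b.equivFun ((1 : ℚ) ⊗ₜ[ℤ] (∑ i, v i • s i)) = _
    rw [hv, ← b.equivFun_symm_apply, LinearEquiv.apply_symm_apply]
  · let β := (TensorProduct.isBaseChange ℤ G ℚ).lift f.toIntLinearMap
    have hβ (g : G) : β ((1 : ℚ) ⊗ₜ[ℤ] g) = f g :=
      (TensorProduct.isBaseChange ℤ G ℚ).lift_eq f.toIntLinearMap g
    rw [← hβ, ← b.sum_equivFun ((1 : ℚ) ⊗ₜ[ℤ] g), map_sum]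
    refine Finset.sum_congr rfl fun i _ ↦ ?_
    rw [map_smul, hb, hβ, Rat.smul_def]
    rfl

lemma posSemidef_of_int_nonneg {ι : Type*} [Fintype ι] {M : Matrix ι ι ℝ} (hM : M.IsHermitian)
    (hint : ∀ v : ι → ℤ, 0 ≤ (fun i ↦ (v i : ℝ)) ⬝ᵥ M *ᵥ fun i ↦ (v i : ℝ)) :
    M.PosSemidef := by
  have hrat (w : ι → ℚ) : 0 ≤ (fun i ↦ (w i : ℝ)) ⬝ᵥ M *ᵥ fun i ↦ (w i : ℝ) := by
    obtain ⟨d, hd⟩ := IsLocalization.exist_integer_multiples_of_finite (nonZeroDivisors ℤ) w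
    choose v hv using hd
    have hd₀ : ((d : ℤ) : ℝ) ≠ 0 := Int.cast_ne_zero.mpr (nonZeroDivisors.ne_zero d.2)
    have hw : (fun i ↦ (w i : ℝ)) = ((d : ℤ) : ℝ)⁻¹ • fun i ↦ (v i : ℝ) := by
      funext i
      have hvi : (v i : ℝ) = (d : ℤ) * (w i : ℝ) := by
        have hvi := hv i
        rw [zsmul_eq_mul, eq_intCast] at hvi
        exact_mod_cast congrArg (Rat.cast : ℚ → ℝ) hvi
      rw [Pi.smul_apply, smul_eq_mul, hvi, inv_mul_cancel_left₀ hd₀]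
    rw [hw, mulVec_smul, dotProduct_smul, smul_dotProduct, smul_smul, smul_eq_mul]
    exact mul_nonneg (mul_self_nonneg _) (hint v)
  have hclosed : IsClosed {v : ι → ℝ | 0 ≤ v ⬝ᵥ M *ᵥ v} := by
    refine isClosed_le continuous_const ?_
    simp only [dotProduct, mulVec]
    fun_prop
  have hdense : DenseRange fun (w : ι → ℚ) i ↦ (w i : ℝ) :=
    DenseRange.piMap fun _ ↦ Rat.denseRange_cast
  refine .of_dotProduct_mulVec_nonneg hM fun v ↦ ?_
  simpa using hdense.induction_on (p := fun v ↦ 0 ≤ v ⬝ᵥ M *ᵥ v) v hclosed hrat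

lemma exists_euclidean_embedding [FiniteDimensional ℚ (ℚ ⊗[ℤ] G)]
    (hq : ∀ x y, q (x + y) + q (x - y) = 2 * (q x + q y)) (hpos : ∀ x, 0 ≤ q x) :
    ∃ Φ : G →+ (Fin (grpRank G) → ℝ), ∀ g, Φ g ⬝ᵥ Φ g = q g := by
  let b (x : G) : G →+ ℝ := AddMonoidHom.mk' (fun y ↦ QuadraticMap.polar q x y / 2) fun y z ↦ by
    simp only [polar_add_right_of_parallelogram hq, add_div]
  have hsymm (x y : G) : b x y = b y x := by
    simp only [b, AddMonoidHom.mk'_apply, QuadraticMap.polar_comm q x y]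
  have hself (x : G) : b x x = q x := by
    simp only [b, AddMonoidHom.mk'_apply, polar_self_of_parallelogram hq]
    ring
  obtain ⟨s, c, hc, hexpand⟩ := exists_rational_coordinates G
  let M : Matrix (Fin (grpRank G)) (Fin (grpRank G)) ℝ := .of fun i j ↦ b (s i) (s j)
  let cR : G →+ (Fin (grpRank G) → ℝ) := ((Rat.castHom ℝ).toAddMonoidHom.compLeft _).comp c
  have hqM (g : G) : q g = cR g ⬝ᵥ M *ᵥ cR g := by
    rw [← hself, hexpand (b g) g, dotProduct]
    refine Finset.sum_congr rfl fun i _ ↦ congrArg _ ?_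
    rw [hsymm, hexpand (b (s i)) g, mulVec, dotProduct]
    exact Finset.sum_congr rfl fun j _ ↦ mul_comm _ _
  have hM : M.PosSemidef := by
    refine posSemidef_of_int_nonneg (by ext i j; exact hsymm _ _) fun v ↦ ?_
    have hv : cR (∑ i, v i • s i) = fun i ↦ (v i : ℝ) := by
      funext i
      exact (congrArg Rat.cast (congrFun (hc v) i)).trans (Rat.cast_intCast _)
    rw [← hv, ← hqM]
    exact hpos _
  obtain ⟨N, hN⟩ : ∃ N, M = Nᴴ * N := by
    open scoped MatrixOrder in exact CStarAlgebra.nonneg_iff_eq_star_mul_self.mp hM.nonneg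
  refine ⟨N.mulVecLin.toAddMonoidHom.comp cR, fun g ↦ ?_⟩
  rw [hqM, hN, ← mulVec_mulVec, dotProduct_mulVec, vecMul_conjTranspose]
  simp

end EuclideanEmbedding

section Packing

lemma floor_mem_Icc_of_abs_le {ρ x : ℝ} (hρ : 0 < ρ) (hx : |x| ≤ ρ) (k : ℕ) :
    ⌊x * k / ρ⌋ ∈ Finset.Icc (-(k : ℤ)) k := by
  obtain ⟨hlow, hupp⟩ := abs_le.mp hx
  rw [Finset.mem_Icc, Int.le_floor, Int.floor_le_iff, le_div_iff₀ hρ, div_lt_iff₀ hρ]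
  push_cast
  constructor <;> nlinarith [(k.cast_nonneg : (0 : ℝ) ≤ k)]

lemma exists_subset_abs_sub_le {α ι : Type*} [Fintype ι] (Φ : α → ι → ℝ) {ρ : ℝ} (hρ : 0 < ρ)
    {s : Finset α} (hs : ∀ g ∈ s, ∀ i, |Φ g i| ≤ ρ) {k m : ℕ} (hk : 0 < k)
    (hcard : (2 * k + 1) ^ Fintype.card ι * m < s.card) :
    ∃ t ⊆ s, m < t.card ∧ ∀ g ∈ t, ∀ g' ∈ t, ∀ i, |Φ g i - Φ g' i| ≤ ρ / k := by
  classical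
  let cell (g : α) (i : ι) : ℤ := ⌊Φ g i * k / ρ⌋
  have hmap : ∀ g ∈ s, cell g ∈ Fintype.piFinset fun _ ↦ Finset.Icc (-(k : ℤ)) k := fun g hg ↦
    Fintype.mem_piFinset.mpr fun i ↦ floor_mem_Icc_of_abs_le hρ (hs g hg i) k
  have hcells : (Fintype.piFinset fun _ : ι ↦ Finset.Icc (-(k : ℤ)) k).card =
      (2 * k + 1) ^ Fintype.card ι := by
    rw [Fintype.card_piFinset, Finset.prod_const, Finset.card_univ, Int.card_Icc]
    congr 1
    lia
  obtain ⟨c, -, hc⟩ :=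
    Finset.exists_lt_card_fiber_of_mul_lt_card_of_maps_to hmap (hcells ▸ hcard)
  refine ⟨_, Finset.filter_subset _ _, hc, fun g hg g' hg' i ↦ ?_⟩
  have hcell : cell g i = cell g' i :=
    congrFun ((Finset.mem_filter.mp hg).2.trans (Finset.mem_filter.mp hg').2.symm) i
  have hlt := Int.abs_sub_lt_one_of_floor_eq_floor hcell
  have hk' : (0 : ℝ) < k := Nat.cast_pos.mpr hk
  rw [← sub_div, ← sub_mul, abs_div, abs_mul, abs_of_pos hρ, abs_of_pos hk', div_lt_one hρ] at hlt
  exact (le_div_iff₀ hk').mpr hlt.le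

variable {G : Type*} [AddCommGroup G] [FiniteDimensional ℚ (ℚ ⊗[ℤ] G)] {h : G → ℝ} {C : ℝ}

lemma IsAlmostQuadratic.exists_subset_apply_sub_le (hh : IsAlmostQuadratic h C)
    (hpos : ∀ x, 0 ≤ h x) {D : ℝ} (hD : 0 < D) {s : Finset G} (hs : ∀ g ∈ s, h g + C ≤ D)
    {k m : ℕ} (hk : 0 < k) (hcard : (2 * k + 1) ^ grpRank G * m < s.card) :
    ∃ t ⊆ s, m < t.card ∧ ∀ g ∈ t, ∀ g' ∈ t, h (g - g') ≤ grpRank G * D / k ^ 2 + C := by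
  obtain ⟨Φ, hΦ⟩ := exists_euclidean_embedding hh.canonicalHeight_parallelogram
    (hh.canonicalHeight_nonneg hpos)
  have hcoord (g : G) (hg : g ∈ s) (i) : |Φ g i| ≤ √D := by
    refine Real.abs_le_sqrt ?_
    calc Φ g i ^ 2 ≤ Φ g ⬝ᵥ Φ g := by
          rw [sq]
          exact Finset.single_le_sum (f := fun i ↦ Φ g i * Φ g i)
            (fun i _ ↦ mul_self_nonneg _) (Finset.mem_univ i)
      _ ≤ D := by linarith [hΦ g, hs g hg, (abs_le.mp (hh.abs_canonicalHeight_sub_le g)).2]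
  obtain ⟨t, hts, htm, ht⟩ := exists_subset_abs_sub_le Φ (Real.sqrt_pos.mpr hD) hcoord hk
    (by rwa [Fintype.card_fin])
  refine ⟨t, hts, htm, fun g hg g' hg' ↦ ?_⟩
  have hterm (i) : Φ (g - g') i * Φ (g - g') i ≤ D / k ^ 2 := by
    rw [← sq, ← sq_abs, map_sub, Pi.sub_apply, ← Real.sq_sqrt hD.le, ← div_pow]
    exact pow_le_pow_left₀ (abs_nonneg _) (ht g hg g' hg' i) 2
  have hsum : canonicalHeight h (g - g') ≤ grpRank G * D / k ^ 2 := by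
    rw [← hΦ, dotProduct, mul_div_assoc]
    simpa using Finset.sum_le_sum fun i (_ : i ∈ Finset.univ) ↦ hterm i
  linarith [(abs_le.mp (hh.abs_canonicalHeight_sub_le (g - g'))).1]

lemma IsAlmostQuadratic.card_le_mul_of_apply_add_le (hh : IsAlmostQuadratic h C)
    (hpos : ∀ x, 0 ≤ h x) {D : ℝ} (hD : 0 < D) {s : Finset G} (hs : ∀ g ∈ s, h g + C ≤ D) {m : ℕ}
    (hm : ∀ t : Finset G, (∀ g ∈ t, h g ≤ 1 + C) → t.card ≤ m) :
    s.card ≤ (2 * (⌈grpRank G * D⌉₊ + 1) + 1) ^ grpRank G * m := by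
  classical
  by_contra! hcard
  set k := ⌈grpRank G * D⌉₊ + 1
  have hk : 1 ≤ (k : ℝ) := by exact_mod_cast Nat.le_add_left 1 _
  have hDk : grpRank G * D ≤ k := (Nat.le_ceil _).trans (by exact_mod_cast Nat.le_add_right _ 1)
  obtain ⟨t, -, htm, ht⟩ := hh.exists_subset_apply_sub_le hpos hD hs (Nat.succ_pos _) hcard
  obtain ⟨g₀, hg₀⟩ : t.Nonempty := Finset.card_pos.mp (Nat.zero_lt_of_lt htm)
  refine htm.not_ge ?_
  rw [← Finset.card_image_of_injective t (sub_left_injective (b := g₀))]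
  refine hm _ (Finset.forall_mem_image.mpr fun g hg ↦ (ht g hg g₀ hg₀).trans ?_)
  gcongr
  rw [div_le_one (by positivity)]
  exact hDk.trans (le_self_pow₀ hk two_ne_zero)

end Packing

/-! ### Norm bounds by powers of a quasi-triangle constant -/

/-- The norm of `L` satisfies the triangle inequality `‖a + b‖ ≤ M * max ‖a‖ ‖b‖`. This treats
archimedean (`M = 2`) and ultrametric (`M = 1`) fields uniformly, and leaves room to enlarge `M`. -/
class IsQuasiUltrametric (L : Type*) [NormedField L] (M : ℝ) : Prop where
  one_le : 1 ≤ M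
  norm_add_le_mul_max : ∀ a b : L, ‖a + b‖ ≤ M * max ‖a‖ ‖b‖

lemma IsQuasiUltrametric.mono {L : Type*} [NormedField L] {M M' : ℝ} (h : IsQuasiUltrametric L M)
    (hM : M ≤ M') : IsQuasiUltrametric L M' where
  one_le := h.one_le.trans hM
  norm_add_le_mul_max a b := (h.norm_add_le_mul_max a b).trans (by gcongr)

/-- The element `a` has norm at most `M ^ n`. The calculus of this predicate tracks the exponent `n`
through polynomial expressions. -/
def NormLePow {L : Type*} [NormedField L] (M : ℝ) (a : L) (n : ℕ) : Prop := ‖a‖ ≤ M ^ n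

section NormLePow

variable {L : Type*} [NormedField L] {M : ℝ} {a b : L} {m n : ℕ}

namespace NormLePow

lemma neg (ha : NormLePow M a m) : NormLePow M (-a) m := by
  rwa [NormLePow, norm_neg]

lemma pow (ha : NormLePow M a m) (k : ℕ) : NormLePow M (a ^ k) (m * k) := by
  rw [NormLePow, norm_pow, pow_mul]
  exact pow_le_pow_left₀ (norm_nonneg a) ha k

lemma one : NormLePow M (1 : L) 0 := by simp [NormLePow]

lemma of_norm_le_one (ha : ‖a‖ ≤ 1) : NormLePow M a 0 := by simpa [NormLePow] using ha

lemma sq_mul_max_one_le (ha : NormLePow M (a ^ 2) n) (hab : NormLePow M (a ^ 2 * b) n) :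
    ‖a‖ ^ 2 * max 1 ‖b‖ ≤ M ^ n := by
  rw [mul_max_of_nonneg _ _ (by positivity), mul_one, ← norm_pow, ← norm_mul]
  exact max_le ha hab

end NormLePow

variable [IsQuasiUltrametric L M]

open IsQuasiUltrametric (one_le norm_add_le_mul_max)

namespace NormLePow

lemma mono (ha : NormLePow M a m) (hmn : m ≤ n) : NormLePow M a n :=
  ha.trans (pow_le_pow_right₀ (one_le L) hmn)

lemma add (ha : NormLePow M a m) (hb : NormLePow M b n) : NormLePow M (a + b) (max m n + 1) := by
  have hM : 0 ≤ M := zero_le_one.trans (one_le L)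
  calc ‖a + b‖ ≤ M * max ‖a‖ ‖b‖ := norm_add_le_mul_max a b
    _ ≤ M * M ^ max m n := by
        gcongr
        exact max_le (ha.mono (le_max_left m n)) (hb.mono (le_max_right m n))
    _ = M ^ (max m n + 1) := (pow_succ' M _).symm

lemma sub (ha : NormLePow M a m) (hb : NormLePow M b n) : NormLePow M (a - b) (max m n + 1) :=
  sub_eq_add_neg a b ▸ ha.add hb.neg

lemma mul (ha : NormLePow M a m) (hb : NormLePow M b n) : NormLePow M (a * b) (m + n) := by
  have hM : 0 ≤ M := zero_le_one.trans (one_le L)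
  rw [NormLePow, norm_mul, pow_add]
  exact mul_le_mul ha hb (norm_nonneg b) (pow_nonneg hM m)

lemma natCast : ∀ {k n : ℕ}, n ≤ 2 ^ k → NormLePow M (n : L) k
  | 0, n, hn => by
    obtain rfl | rfl : n = 0 ∨ n = 1 := by lia
    · exact of_norm_le_one (by simp)
    · exact of_norm_le_one (by simp)
  | k + 1, n, hn => by
    have hfloor : NormLePow M ((n / 2 : ℕ) : L) k := natCast (by lia)
    have hceil : NormLePow M ((n - n / 2 : ℕ) : L) k := natCast (by lia)
    have hsum : (n : L) = (n / 2 : ℕ) + (n - n / 2 : ℕ) := by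
      rw [← Nat.cast_add, Nat.add_sub_of_le (Nat.div_le_self n 2)]
    rw [hsum]
    exact (hfloor.add hceil).mono (by simp)

lemma ofNat (n : ℕ) [n.AtLeastTwo] : NormLePow M (ofNat(n) : L) (n.log2 + 1) :=
  natCast (n := n) Nat.lt_log2_self.le

lemma of_pow {k : ℕ} (hk : k ≠ 0) (ha : NormLePow M (a ^ k) (k * m)) : NormLePow M a m := by
  have hM : 0 ≤ M := zero_le_one.trans (one_le L)
  rw [NormLePow, norm_pow, mul_comm, pow_mul] at ha
  exact le_of_pow_le_pow_left₀ hk (pow_nonneg hM m) ha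

end NormLePow

lemma NormLePow.inv_one_add (hz : M * ‖a‖ < 1) : 1 + a ≠ 0 ∧ NormLePow M (1 + a)⁻¹ 1 := by
  have hM : 0 < M := zero_lt_one.trans_le (one_le L)
  have hmax : 1 ≤ M * max ‖1 + a‖ ‖a‖ := by
    simpa using norm_add_le_mul_max (M := M) (1 + a) (-a)
  have hle : 1 ≤ M * ‖1 + a‖ := by
    rw [mul_max_of_nonneg _ _ hM.le] at hmax
    exact (le_max_iff.mp hmax).resolve_right hz.not_ge
  have hpos : 0 < ‖1 + a‖ := pos_of_mul_pos_right (zero_lt_one.trans_le hle) hM.le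
  refine ⟨norm_pos_iff.mp hpos, ?_⟩
  rw [NormLePow, norm_inv, pow_one]
  exact inv_le_of_inv_le₀ hM ((inv_le_iff_one_le_mul₀' hM).mpr hle)

lemma max_one_mul_max_one_le (x y : L) :
    max 1 ‖x‖ * max 1 ‖y‖ ≤ M * max 1 (max ‖x + y‖ ‖x * y‖) := by
  have hM : 0 ≤ M := zero_le_one.trans (one_le L)
  have hsum (x y : L) (hx : ‖x‖ ≤ 1) :
      max 1 ‖x‖ * max 1 ‖y‖ ≤ M * max 1 (max ‖x + y‖ ‖x * y‖) := by
    have hy : ‖y‖ ≤ M * max ‖x + y‖ ‖x‖ := by simpa using norm_add_le_mul_max (M := M) (x + y) (-x)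
    rw [max_eq_left hx, one_mul]
    refine max_le (one_le_mul_of_one_le_of_one_le (one_le L) (le_max_left _ _)) (hy.trans ?_)
    refine mul_le_mul_of_nonneg_left ?_ hM
    exact max_le (le_max_of_le_right (le_max_left _ _)) (le_max_of_le_left hx)
  rcases le_total ‖x‖ 1 with hx | hx
  · exact hsum x y hx
  rcases le_total ‖y‖ 1 with hy | hy
  · simpa only [mul_comm, add_comm] using hsum y x hy
  · rw [max_eq_right hx, max_eq_right hy, ← norm_mul]
    exact (le_max_of_le_right (le_max_right _ _)).trans
      (le_mul_of_one_le_left (by positivity) (one_le L))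

end NormLePow

/-! ### Local estimates for the group law -/

section Local

variable {L : Type*} [NormedField L] {M : ℝ} {A B x x' : L}

open NormLePow IsQuasiUltrametric

lemma exists_projective_normalization (x : L) : ∃ q : L, ‖x * q‖ ≤ 1 ∧ ‖q‖ ≤ 1 ∧
    (x * q = 1 ∨ q = 1) ∧ ‖q‖ * max 1 ‖x‖ = 1 := by
  rcases le_total ‖x‖ 1 with hx | hx
  · exact ⟨1, by simpa, by simp, .inr rfl, by simp [hx]⟩
  · have hx0 : x ≠ 0 := norm_pos_iff.mp (zero_lt_one.trans_le hx)
    refine ⟨x⁻¹, by simp [hx0], ?_, .inl (mul_inv_cancel₀ hx0), ?_⟩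
    · rw [norm_inv]
      exact inv_le_one_of_one_le₀ hx
    · rw [max_eq_right hx, norm_inv, inv_mul_cancel₀ (norm_ne_zero_iff.mpr hx0)]

/-- The numerator of the duplication formula on `y² = x³ + Ax + B`, homogenised to degree `4`. -/
def dupNum (A B p q : L) : L :=
  p ^ 4 - 2 * A * p ^ 2 * q ^ 2 - 8 * B * p * q ^ 3 + A ^ 2 * q ^ 4

/-- The denominator of the duplication formula on `y² = x³ + Ax + B`, homogenised to degree `4`. -/
def dupDenom (A B p q : L) : L :=
  4 * q * (p ^ 3 + A * p * q ^ 2 + B * q ^ 3)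

lemma max_one_mul_norm_dup_eq {q : L} (hq : ‖q‖ * max 1 ‖x‖ = 1)
    (hx' : x' * (4 * (x ^ 3 + A * x + B)) = x ^ 4 - 2 * A * x ^ 2 - 8 * B * x + A ^ 2) :
    max 1 ‖x'‖ * ‖4 * (x ^ 3 + A * x + B)‖ =
      max ‖dupDenom A B (x * q) q‖ ‖dupNum A B (x * q) q‖ * max 1 ‖x‖ ^ 4 := by
  have hdenom : dupDenom A B (x * q) q = 4 * (x ^ 3 + A * x + B) * q ^ 4 := by
    rw [dupDenom]; ring
  have hnum : dupNum A B (x * q) q = x' * dupDenom A B (x * q) q := by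
    rw [hdenom, dupNum]
    linear_combination -q ^ 4 * hx'
  have hscale : ‖4 * (x ^ 3 + A * x + B)‖ = ‖dupDenom A B (x * q) q‖ * max 1 ‖x‖ ^ 4 := by
    rw [hdenom, norm_mul _ (q ^ 4), norm_pow, mul_assoc, ← mul_pow, hq, one_pow, mul_one]
  rw [hscale, hnum, norm_mul x', ← mul_assoc, max_mul_of_nonneg _ _ (norm_nonneg _), one_mul]

variable [IsQuasiUltrametric L M]

lemma max_one_mul_max_one_mul_norm_sub_sq_le {x₁ x₂ x₃ x₄ : L}
    (hA : NormLePow M A 1) (hB : NormLePow M B 1)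
    (hsum : (x₃ + x₄) * (x₁ - x₂) ^ 2 = 2 * (x₁ * x₂ + A) * (x₁ + x₂) + 4 * B)
    (hprod : x₃ * x₄ * (x₁ - x₂) ^ 2 = (x₁ * x₂ - A) ^ 2 - 4 * B * (x₁ + x₂)) :
    max 1 ‖x₃‖ * max 1 ‖x₄‖ * ‖x₁ - x₂‖ ^ 2 ≤ M ^ 20 * (max 1 ‖x₁‖ ^ 2 * max 1 ‖x₂‖ ^ 2) := by
  obtain ⟨q₁, hp₁, hq₁, -, hmax₁⟩ := exists_projective_normalization x₁
  obtain ⟨q₂, hp₂, hq₂, -, hmax₂⟩ := exists_projective_normalization x₂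
  replace hp₁ := of_norm_le_one (M := M) hp₁
  replace hp₂ := of_norm_le_one (M := M) hp₂
  replace hq₁ := of_norm_le_one (M := M) hq₁
  replace hq₂ := of_norm_le_one (M := M) hq₂
  set d := (x₁ - x₂) ^ 2 * (q₁ * q₂) ^ 2 with hd
  have bound_one : NormLePow M d 19 := by
    rw [show d = ((x₁ * q₁) * q₂ - (x₂ * q₂) * q₁) ^ 2 by rw [hd]; ring]
    exact .mono (by apply_rules [sub, mul, pow]) (by decide)
  have bound_sum : NormLePow M ((x₃ + x₄) * d) 19 := by
    rw [show (x₃ + x₄) * d = 2 * ((x₁ * q₁) * (x₂ * q₂) + A * q₁ * q₂) *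
        ((x₁ * q₁) * q₂ + (x₂ * q₂) * q₁) + 4 * B * q₁ ^ 2 * q₂ ^ 2 by
      linear_combination (q₁ * q₂) ^ 2 * hsum]
    exact .mono (by apply_rules [add, mul, pow, ofNat]) (by decide)
  have bound_prod : NormLePow M (x₃ * x₄ * d) 19 := by
    rw [show x₃ * x₄ * d = ((x₁ * q₁) * (x₂ * q₂) - A * q₁ * q₂) ^ 2 -
        4 * B * q₁ * q₂ * ((x₁ * q₁) * q₂ + (x₂ * q₂) * q₁) by
      linear_combination (q₁ * q₂) ^ 2 * hprod]
    exact .mono (by apply_rules [add, sub, mul, pow, ofNat]) (by decide)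
  have hscale : ‖x₁ - x₂‖ ^ 2 = ‖d‖ * (max 1 ‖x₁‖ ^ 2 * max 1 ‖x₂‖ ^ 2) := by
    rw [hd, norm_mul, norm_pow, norm_pow, norm_mul]
    calc ‖x₁ - x₂‖ ^ 2
        = ‖x₁ - x₂‖ ^ 2 * (‖q₁‖ * max 1 ‖x₁‖) ^ 2 * (‖q₂‖ * max 1 ‖x₂‖) ^ 2 := by
          rw [hmax₁, hmax₂]; ring
      _ = _ := by ring
  have hM : 0 ≤ M := zero_le_one.trans (one_le L)
  rw [hscale, ← mul_assoc]
  gcongr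
  calc max 1 ‖x₃‖ * max 1 ‖x₄‖ * ‖d‖
      ≤ M * max 1 (max ‖x₃ + x₄‖ ‖x₃ * x₄‖) * ‖d‖ :=
        mul_le_mul_of_nonneg_right (max_one_mul_max_one_le x₃ x₄) (norm_nonneg d)
    _ = M * max ‖d‖ (max ‖(x₃ + x₄) * d‖ ‖x₃ * x₄ * d‖) := by
        rw [mul_assoc, max_mul_of_nonneg _ _ (norm_nonneg d), max_mul_of_nonneg _ _ (norm_nonneg d),
          one_mul, norm_mul (x₃ + x₄), norm_mul (x₃ * x₄)]
    _ ≤ M * M ^ 19 := by gcongr; exact max_le bound_one (max_le bound_sum bound_prod)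
    _ = M ^ 20 := (pow_succ' M 19).symm

lemma max_one_mul_norm_dup_le (hA : NormLePow M A 1) (hB : NormLePow M B 1)
    (hx' : x' * (4 * (x ^ 3 + A * x + B)) = x ^ 4 - 2 * A * x ^ 2 - 8 * B * x + A ^ 2) :
    max 1 ‖x'‖ * ‖4 * (x ^ 3 + A * x + B)‖ ≤ M ^ 50 * max 1 ‖x‖ ^ 4 := by
  obtain ⟨q, hp, hq, -, hmax⟩ := exists_projective_normalization x
  replace hp := of_norm_le_one (M := M) hp
  replace hq := of_norm_le_one (M := M) hq
  have bound_denom : NormLePow M (dupDenom A B (x * q) q) 50 :=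
    .mono (by apply_rules [add, mul, pow, ofNat]) (by decide)
  have bound_num : NormLePow M (dupNum A B (x * q) q) 50 :=
    .mono (by apply_rules [add, sub, mul, pow, ofNat]) (by decide)
  rw [max_one_mul_norm_dup_eq hmax hx']
  gcongr
  exact max_le bound_denom bound_num

lemma one_le_mul_max_norm_of_bezout {F G u v : L} (hu : NormLePow M u 39) (hv : NormLePow M v 39)
    (hdisc : 1 ≤ M ^ 10 * ‖u * F + v * G‖) : 1 ≤ M ^ 50 * max ‖G‖ ‖F‖ := by
  have hM : 0 ≤ M := zero_le_one.trans (one_le L)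
  calc 1 ≤ M ^ 10 * ‖u * F + v * G‖ := hdisc
    _ ≤ M ^ 10 * (M * max ‖u * F‖ ‖v * G‖) := by gcongr; exact norm_add_le_mul_max _ _
    _ ≤ M ^ 10 * (M * (M ^ 39 * max ‖G‖ ‖F‖)) := by
        gcongr
        rw [norm_mul, norm_mul]
        exact max_le (mul_le_mul hu (le_max_right _ _) (norm_nonneg F) (by positivity))
          (mul_le_mul hv (le_max_left _ _) (norm_nonneg G) (by positivity))
    _ = M ^ 50 * max ‖G‖ ‖F‖ := by ring

lemma le_max_one_mul_norm_dup (hA : NormLePow M A 1) (hB : NormLePow M B 1)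
    (hdisc : 1 ≤ M ^ 10 * ‖4 * (4 * A ^ 3 + 27 * B ^ 2)‖)
    (hx' : x' * (4 * (x ^ 3 + A * x + B)) = x ^ 4 - 2 * A * x ^ 2 - 8 * B * x + A ^ 2) :
    max 1 ‖x‖ ^ 4 ≤ M ^ 50 * (max 1 ‖x'‖ * ‖4 * (x ^ 3 + A * x + B)‖) := by
  obtain ⟨q, hp, hq, hone, hmax⟩ := exists_projective_normalization x
  replace hp := of_norm_le_one (M := M) hp
  replace hq := of_norm_le_one (M := M) hq
  rw [max_one_mul_norm_dup_eq hmax hx', ← mul_assoc]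
  generalize x * q = p at hp hone
  refine le_mul_of_one_le_left (by positivity) ?_
  -- The Bézout identities expressing the resultant times `p ^ 7`, respectively `q ^ 7`.
  rcases hone with rfl | rfl
  · refine one_le_mul_max_norm_of_bezout
      (u := 4 * (4 * A ^ 3 + 27 * B ^ 2) - 4 * (A ^ 2 * B) * q +
        4 * A * (3 * A ^ 3 + 22 * B ^ 2) * q ^ 2 + 12 * B * (A ^ 3 + 8 * B ^ 2) * q ^ 3)
      (v := A ^ 2 * B + A * (5 * A ^ 3 + 32 * B ^ 2) * q +
        2 * B * (13 * A ^ 3 + 96 * B ^ 2) * q ^ 2 - 3 * A ^ 2 * (A ^ 3 + 8 * B ^ 2) * q ^ 3)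
      (.mono (by apply_rules (maxDepth := 100) [add, sub, mul, pow, ofNat]) (by decide))
      (.mono (by apply_rules (maxDepth := 100) [add, sub, mul, pow, ofNat]) (by decide)) ?_
    convert hdisc using 3
    rw [dupNum, dupDenom]; ring
  · refine one_le_mul_max_norm_of_bezout
      (u := 12 * p ^ 2 + 16 * A) (v := 5 * A * p + 27 * B - 3 * p ^ 3)
      (.mono (by apply_rules [add, mul, pow, ofNat]) (by decide))
      (.mono (by apply_rules [add, sub, mul, pow, ofNat]) (by decide)) ?_
    convert hdisc using 3
    rw [dupNum, dupDenom]; ring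

lemma max_one_norm_le_of_cubic_eq_zero (hA : NormLePow M A 1) (hB : NormLePow M B 1)
    (hx : x ^ 3 + A * x + B = 0) : max 1 ‖x‖ ≤ M := by
  have hM : 0 ≤ M := zero_le_one.trans (one_le L)
  refine max_le (one_le L) ?_
  rcases le_total ‖x‖ 1 with hx1 | hx1
  · exact hx1.trans (one_le L)
  rw [NormLePow, pow_one] at hA hB
  have hcube : ‖x‖ ^ 3 ≤ M * (M * ‖x‖) := by
    calc ‖x‖ ^ 3 = ‖-(A * x) + -B‖ := by
          rw [← norm_pow]; congr 1; linear_combination hx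
      _ ≤ M * max ‖-(A * x)‖ ‖-B‖ := norm_add_le_mul_max _ _
      _ ≤ M * (M * ‖x‖) := by
          rw [norm_neg, norm_neg, norm_mul]
          gcongr
          exact max_le (by gcongr) (hB.trans (le_mul_of_one_le_right hM hx1))
  refine le_of_sq_le_sq (le_of_mul_le_mul_right ?_ (zero_lt_one.trans_le hx1)) hM
  linarith

lemma NormLePow.of_sq_eq_cubic {y : L} (hA : NormLePow M A 1) (hB : NormLePow M B 1)
    (hx : NormLePow M x 1) (hy : y ^ 2 = x ^ 3 + A * x + B) : NormLePow M y 3 :=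
  .of_pow two_ne_zero (hy ▸ .mono (by apply_rules [add, mul, pow]) (by decide))

end Local

/-! ### Affinely dependent labelled points -/

section AffineDependence

/-- The minor of the columns `a`, `k` in the matrix of differences of three rows. -/
def minor {R : Type*} [CommRing R] (a k : Fin 3 → R) : R :=
  (a 1 - a 0) * (k 2 - k 0) - (a 2 - a 0) * (k 1 - k 0)

/-- The point `(X, Y, κ)` of affine three-space is coplanar with the three points
`(a i, b i, k i)`. -/
def IsCoplanar {R : Type*} [CommRing R] (X Y κ : R) (a b k : Fin 3 → R) : Prop :=
  (Y - b 0) * minor a k - (X - a 0) * minor b k + (κ - k 0) * minor b a = 0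

variable {L : Type*} [NormedField L] {M : ℝ} {A B X Y κ e t r w : L} {a b k : Fin 3 → L} {m n : ℕ}

open NormLePow IsQuasiUltrametric

/-- The expansion at infinity of a point `(X, Y)` on `y² = x³ + Ax + B` with `X` large, in terms of
the uniformiser `t = -X / Y`: one has `X⁻¹ = r = t² w` with a unit `w` close to `1`. -/
structure IsExpansionAtInfinity (M : ℝ) (A B X Y t r w : L) : Prop where
  t_mul_Y : t * Y = -X
  X_mul_r : X * r = 1
  r_eq : r = t ^ 2 * w
  w_eq : w = 1 + A * r ^ 2 + B * r ^ 3
  w_ne_zero : w ≠ 0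
  mul_norm_r_lt : M ^ 20 * ‖r‖ < 1
  norm_t : NormLePow M t 0
  norm_r : NormLePow M r 0
  norm_w_inv : NormLePow M w⁻¹ 1

/-- Three points `(a i, b i)` on `y² = x³ + Ax + B` with labels `k i`, all data being bounded
by `M`. -/
structure IsBoundedTriple (M : ℝ) (A B : L) (a b k : Fin 3 → L) : Prop where
  norm_A : NormLePow M A 1
  norm_B : NormLePow M B 1
  norm_x : ∀ i, NormLePow M (a i) 1
  equation : ∀ i, b i ^ 2 = a i ^ 3 + A * a i + B
  norm_label : ∀ i, NormLePow M (k i) 1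

/-- The chord formula for the sum `(X', Y')` of the points `(X, Y)` and `(a, b)`, which applies only
if `X ≠ a`. -/
def IsChordSum (X Y a b X' Y' : L) : Prop :=
  X ≠ a → X' = ((b - Y) / (a - X)) ^ 2 - a - X ∧ Y' = -((b - Y) / (a - X) * (X' - a) + b)

/-- The error term in the expansion of the sum of `(a, b)` and a point near infinity. -/
def chordError (A B a b r t : L) : L :=
  A + a ^ 2 + a * A * r + 2 * B * r + 2 * b * t * (A * r + B * r ^ 2) +
    (a + 2 * b * t) * (2 * a - a ^ 2 * r)

namespace IsExpansionAtInfinity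

lemma t_ne_zero (hexp : IsExpansionAtInfinity M A B X Y t r w) : t ≠ 0 := by
  rintro rfl
  simpa [hexp.r_eq] using hexp.X_mul_r

lemma chord_slope_mul {a b u : L} (hexp : IsExpansionAtInfinity M A B X Y t r w)
    (hu : u * (1 - a * r) = 1) (hXa : X ≠ a) :
    (b - Y) / (a - X) * t = -(u * (1 + b * r * t)) := by
  have hne : a - X ≠ 0 := sub_ne_zero.mpr hXa.symm
  have hmul : (a - X) * u = -X := by linear_combination -X * hu - a * u * hexp.X_mul_r
  field_simp
  linear_combination -hexp.t_mul_Y + (1 + b * r * t) * hmul - b * t * hexp.X_mul_r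

lemma chordSum_x_eq {a b X' u : L} (hexp : IsExpansionAtInfinity M A B X Y t r w)
    (hb : b ^ 2 = a ^ 3 + A * a + B) (hu : u * (1 - a * r) = 1) (hXa : X ≠ a)
    (hX' : X' = ((b - Y) / (a - X)) ^ 2 - a - X) :
    X' = a + 2 * b * t + t ^ 2 * (w * u ^ 2 * chordError A B a b r t) := by
  have hXr := hexp.X_mul_r
  have hrt := hexp.r_eq
  have hr0 : r ≠ 0 := right_ne_zero_of_mul_eq_one hXr
  have hslope := hexp.chord_slope_mul (b := b) hu hXa
  have hX'r : X' * r = w * (u * (1 + b * r * t)) ^ 2 - a * r - 1 := by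
    rw [hX']
    linear_combination w * ((b - Y) / (a - X) * t - u * (1 + b * r * t)) * hslope - hXr +
      ((b - Y) / (a - X)) ^ 2 * hrt
  have hw : w * (1 + b * r * t) ^ 2 =
      (1 + 2 * a * r + 2 * b * t * r) * (1 - a * r) ^ 2 + r ^ 2 * chordError A B a b r t := by
    rw [chordError]
    linear_combination -(b ^ 2 * r ^ 2) * hrt + (1 + 2 * b * r * t) * hexp.w_eq + r ^ 3 * hb
  have hu2 : u ^ 2 * (1 - a * r) ^ 2 = 1 := by rw [← mul_pow, hu, one_pow]
  apply mul_right_cancel₀ hr0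
  linear_combination hX'r + u ^ 2 * hw + (1 + 2 * a * r + 2 * b * t * r) * hu2 +
    r * u ^ 2 * chordError A B a b r t * hrt

lemma chordSum_y_eq {a b X' Y' u x : L} (hexp : IsExpansionAtInfinity M A B X Y t r w)
    (hu : u * (1 - a * r) = 1) (hXa : X ≠ a) (hX' : X' = a + 2 * b * t + t ^ 2 * x)
    (hY' : Y' = -((b - Y) / (a - X) * (X' - a) + b)) :
    Y' = b + t * (x + u * t * w * (a + b * t) * (2 * b + t * x)) := by
  have hslope := hexp.chord_slope_mul (b := b) hu hXa
  have hunit : u * (1 + b * r * t) = 1 + t * (u * t * w * (a + b * t)) := by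
    linear_combination hu + u * (a + b * t) * hexp.r_eq
  apply mul_right_cancel₀ hexp.t_ne_zero
  rw [hY', hX']
  linear_combination -(2 * b * t + t ^ 2 * x) * hslope + (2 * b * t + t ^ 2 * x) * hunit

end IsExpansionAtInfinity

variable [IsQuasiUltrametric L M]

lemma NormLePow.minor (ha : ∀ i, NormLePow M (a i) m) (hk : ∀ i, NormLePow M (k i) n) :
    NormLePow M (minor a k) (m + n + 3) :=
  .mono (by apply_rules [sub, mul]) (by simp; lia)

lemma exists_isExpansionAtInfinity (hA : NormLePow M A 1) (hB : NormLePow M B 1)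
    (h : Y ^ 2 = X ^ 3 + A * X + B) (hX : M ^ 20 < ‖X‖) :
    ∃ t r w, IsExpansionAtInfinity M A B X Y t r w := by
  have hM : 0 < M := zero_lt_one.trans_le (one_le L)
  have hXpos : 0 < ‖X‖ := (pow_pos hM 20).trans hX
  have hX0 : X ≠ 0 := norm_pos_iff.mp hXpos
  have hr : M ^ 20 * ‖X⁻¹‖ < 1 := by
    rwa [norm_inv, ← div_eq_mul_inv, div_lt_one hXpos]
  have norm_r : NormLePow M X⁻¹ 0 := .of_norm_le_one <|
    (le_mul_of_one_le_left (norm_nonneg _) (one_le_pow₀ (one_le L))).trans hr.le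
  have hsmall : M * ‖A * X⁻¹ ^ 2 + B * X⁻¹ ^ 3‖ < 1 := by
    have hcoeff : NormLePow M (X⁻¹ * (A + B * X⁻¹)) 19 :=
      .mono (by apply_rules [add, mul]) (by decide)
    calc M * ‖A * X⁻¹ ^ 2 + B * X⁻¹ ^ 3‖
        = M * (‖X⁻¹ * (A + B * X⁻¹)‖ * ‖X⁻¹‖) := by rw [← norm_mul]; ring_nf
      _ ≤ M * (M ^ 19 * ‖X⁻¹‖) := by gcongr; exact hcoeff
      _ = M ^ 20 * ‖X⁻¹‖ := by ring
      _ < 1 := hr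
  obtain ⟨hw0, hw⟩ := inv_one_add hsmall
  rw [← add_assoc] at hw0 hw
  set w := 1 + A * X⁻¹ ^ 2 + B * X⁻¹ ^ 3 with hwdef
  have hYw : Y ^ 2 = X ^ 3 * w := by rw [h, hwdef]; field_simp
  have hY0 : Y ≠ 0 := pow_ne_zero_iff two_ne_zero |>.mp <|
    hYw ▸ mul_ne_zero (pow_ne_zero 3 hX0) hw0
  have hrt : X⁻¹ = (-X / Y) ^ 2 * w := by
    rw [div_pow, hYw]; field_simp
  have norm_t : NormLePow M (-X / Y) 0 := by
    refine .of_pow two_ne_zero (.of_norm_le_one ?_)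
    rw [(eq_mul_inv_iff_mul_eq₀ hw0).mpr hrt.symm, norm_mul]
    calc ‖X⁻¹‖ * ‖w⁻¹‖ ≤ ‖X⁻¹‖ * M ^ 20 := by gcongr; exact hw.mono (by decide)
      _ ≤ 1 := by rw [mul_comm]; exact hr.le
  exact ⟨-X / Y, X⁻¹, w, div_mul_cancel₀ _ hY0, mul_inv_cancel₀ hX0, hrt, hwdef, hw0, hr, norm_t,
    norm_r, hw⟩

lemma norm_sq_mul_max_one_le_of_le (he : NormLePow M e n) (hX : NormLePow M X 20)
    (hnm : 2 * n + 20 ≤ m) : ‖e‖ ^ 2 * max 1 ‖X‖ ≤ M ^ m :=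
  sq_mul_max_one_le ((he.pow 2).mono (by lia)) (((he.pow 2).mul hX).mono (by lia))

namespace IsExpansionAtInfinity

lemma norm_w (hexp : IsExpansionAtInfinity M A B X Y t r w) (hA : NormLePow M A 1)
    (hB : NormLePow M B 1) : NormLePow M w 3 := by
  have norm_r := hexp.norm_r
  exact hexp.w_eq ▸ .mono (by apply_rules [add, mul, pow, one]) (by decide)

lemma norm_sq_mul_max_one_le (hexp : IsExpansionAtInfinity M A B X Y t r w) {z : L}
    (hz : NormLePow M z n) (hnm : 2 * n + 1 ≤ m) (he : e = t * z) :
    ‖e‖ ^ 2 * max 1 ‖X‖ ≤ M ^ m := by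
  have norm_t := hexp.norm_t
  have norm_w_inv := hexp.norm_w_inv
  have hmul : e ^ 2 * X = z ^ 2 * w⁻¹ := by
    rw [eq_mul_inv_iff_mul_eq₀ hexp.w_ne_zero, he]
    linear_combination z ^ 2 * hexp.X_mul_r - z ^ 2 * X * hexp.r_eq
  refine sq_mul_max_one_le ?_ ?_
  · exact he ▸ .mono (by apply_rules [mul, pow]) (by lia)
  · exact hmul ▸ .mono (by apply_rules [mul, pow]) (by lia)

end IsExpansionAtInfinity

namespace IsBoundedTriple

variable (hT : IsBoundedTriple M A B a b k)
include hT

lemma norm_y (i : Fin 3) : NormLePow M (b i) 3 :=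
  .of_sq_eq_cubic hT.norm_A hT.norm_B (hT.norm_x i) (hT.equation i)

lemma exists_line (hκ : NormLePow M κ 1) (hcop : IsCoplanar X Y κ a b k) :
    ∃ c, NormLePow M c 13 ∧ minor a k * Y = X * minor b k + c := by
  have norm_x := hT.norm_x
  have norm_y := hT.norm_y
  have norm_label := hT.norm_label
  have bound_xk := NormLePow.minor norm_x norm_label
  have bound_yk := NormLePow.minor norm_y norm_label
  have bound_yx := NormLePow.minor norm_y norm_x
  rw [IsCoplanar] at hcop
  refine ⟨minor a k * b 0 - a 0 * minor b k - (κ - k 0) * minor b a,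
    .mono (by apply_rules [sub, mul]) (by decide), ?_⟩
  linear_combination hcop

lemma norm_minor_x_sq_mul_max_one_le (h : Y ^ 2 = X ^ 3 + A * X + B) (hκ : NormLePow M κ 1)
    (hcop : IsCoplanar X Y κ a b k) : ‖minor a k‖ ^ 2 * max 1 ‖X‖ ≤ M ^ 50 := by
  have bound_xk := NormLePow.minor hT.norm_x hT.norm_label
  have bound_yk := NormLePow.minor hT.norm_y hT.norm_label
  rcases le_or_gt ‖X‖ (M ^ 20) with hX | hX
  · exact norm_sq_mul_max_one_le_of_le bound_xk hX (by decide)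
  obtain ⟨t, r, w, hexp⟩ := exists_isExpansionAtInfinity hT.norm_A hT.norm_B h hX
  have norm_r := hexp.norm_r
  obtain ⟨c, norm_c, hline⟩ := hT.exists_line hκ hcop
  have hz : NormLePow M (-(minor b k + c * r)) 24 :=
    .mono (by apply_rules [neg, add, mul]) (by decide)
  refine hexp.norm_sq_mul_max_one_le hz (by decide) ?_
  linear_combination -(t * r) * hline + minor a k * r * hexp.t_mul_Y -
    (minor a k + t * minor b k) * hexp.X_mul_r

lemma norm_minor_y_sq_mul_max_one_le (h : Y ^ 2 = X ^ 3 + A * X + B) (hκ : NormLePow M κ 1)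
    (hcop : IsCoplanar X Y κ a b k) (hminor : minor a k = 0) :
    ‖minor b k‖ ^ 2 * max 1 ‖X‖ ≤ M ^ 50 := by
  have bound_yk := NormLePow.minor hT.norm_y hT.norm_label
  rcases le_or_gt ‖X‖ (M ^ 20) with hX | hX
  · exact norm_sq_mul_max_one_le_of_le bound_yk hX (by decide)
  obtain ⟨t, r, w, hexp⟩ := exists_isExpansionAtInfinity hT.norm_A hT.norm_B h hX
  have norm_t := hexp.norm_t
  have norm_w := hexp.norm_w hT.norm_A hT.norm_B
  obtain ⟨c, norm_c, hline⟩ := hT.exists_line hκ hcop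
  have hz : NormLePow M (-(t * w * c)) 24 := .mono (by apply_rules [neg, mul]) (by decide)
  refine hexp.norm_sq_mul_max_one_le hz (by decide) ?_
  linear_combination -r * hline + r * Y * hminor - minor b k * hexp.X_mul_r - c * hexp.r_eq

end IsBoundedTriple

lemma IsExpansionAtInfinity.exists_chordSum_eq {a b X' Y' : L}
    (hexp : IsExpansionAtInfinity M A B X Y t r w) (hA : NormLePow M A 1) (hB : NormLePow M B 1)
    (ha : NormLePow M a 1) (hb : b ^ 2 = a ^ 3 + A * a + B) (hsum : IsChordSum X Y a b X' Y') :
    ∃ x y, X' = a + 2 * b * t + t ^ 2 * x ∧ Y' = b + t * y ∧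
      NormLePow M x 20 ∧ NormLePow M y 40 := by
  have hM : 0 < M := zero_lt_one.trans_le (one_le L)
  have hsmall : M * ‖-(a * r)‖ < 1 := by
    calc M * ‖-(a * r)‖ = M * (‖a‖ * ‖r‖) := by rw [norm_neg, norm_mul]
      _ ≤ M * (M ^ 19 * ‖r‖) := by gcongr; exact ha.mono (by decide)
      _ = M ^ 20 * ‖r‖ := by ring
      _ < 1 := hexp.mul_norm_r_lt
  obtain ⟨hu0, norm_u⟩ := inv_one_add hsmall
  rw [← sub_eq_add_neg] at hu0 norm_u
  have hu := inv_mul_cancel₀ hu0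
  have hXa : X ≠ a := by
    rintro rfl
    exact hu0 (sub_eq_zero.mpr hexp.X_mul_r.symm)
  obtain ⟨hX', hY'⟩ := hsum hXa
  have norm_b : NormLePow M b 3 := .of_sq_eq_cubic hA hB ha hb
  have norm_t := hexp.norm_t
  have norm_r := hexp.norm_r
  have norm_w := hexp.norm_w hA hB
  have norm_error : NormLePow M (chordError A B a b r t) 12 :=
    .mono (by apply_rules [add, sub, mul, pow, ofNat]) (by decide)
  generalize (1 - a * r)⁻¹ = u at hu norm_u
  have hx := hexp.chordSum_x_eq hb hu hXa hX'
  have norm_x : NormLePow M (w * u ^ 2 * chordError A B a b r t) 20 :=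
    .mono (by apply_rules [mul, pow]) (by decide)
  generalize w * u ^ 2 * chordError A B a b r t = x at hx norm_x
  exact ⟨x, _, hx, hexp.chordSum_y_eq hu hXa hx hY', norm_x,
    .mono (by apply_rules [add, mul, pow, ofNat]) (by decide)⟩

section Cluster

variable {X' Y' : Fin 3 → L} (hT : IsBoundedTriple M A B a b k)
include hT

-- Substituting the expansions of the three chord sums into the coplanarity relation.
lemma IsExpansionAtInfinity.exists_minor_add_eq (hexp : IsExpansionAtInfinity M A B X Y t r w)
    (hsum : ∀ i, IsChordSum X Y (a i) (b i) (X' i) (Y' i)) (hκ : NormLePow M κ 1)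
    (hcop : IsCoplanar X Y κ X' Y' k) :
    ∃ z, NormLePow M z 130 ∧ minor a k + 3 * t * minor b k = t ^ 2 * z := by
  choose x y hX' hY' norm_x norm_y using fun i ↦
    hexp.exists_chordSum_eq hT.norm_A hT.norm_B (hT.norm_x i) (hT.equation i) (hsum i)
  have norm_t := hexp.norm_t
  have norm_w := hexp.norm_w hT.norm_A hT.norm_B
  have norm_a := hT.norm_x
  have norm_b := hT.norm_y
  have norm_k := hT.norm_label
  have norm_X' (i) : NormLePow M (X' i) 22 :=
    hX' i ▸ .mono (by apply_rules [add, mul, pow, ofNat]) (by decide)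
  have norm_Y' (i) : NormLePow M (Y' i) 41 :=
    hY' i ▸ .mono (by apply_rules [add, mul]) (by decide)
  have bound_Xk := NormLePow.minor norm_X' norm_k
  have bound_Yk := NormLePow.minor norm_Y' norm_k
  have bound_YX := NormLePow.minor norm_Y' norm_X'
  have bound_xk := NormLePow.minor norm_x norm_k
  have bound_yk := NormLePow.minor norm_y norm_k
  refine ⟨t * w * (X' 0 * minor Y' k - Y' 0 * minor X' k + (κ - k 0) * minor Y' X') -
    minor x k - minor y k, .mono (by apply_rules [add, sub, mul]) (by decide), ?_⟩
  have hXk : minor X' k = minor a k + 2 * t * minor b k + t ^ 2 * minor x k := by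
    simp only [minor, hX']; ring
  have hYk : minor Y' k = minor b k + t * minor y k := by
    simp only [minor, hY']; ring
  have hcurve : minor X' k + t * minor Y' k =
      t ^ 3 * w * (X' 0 * minor Y' k - Y' 0 * minor X' k + (κ - k 0) * minor Y' X') := by
    rw [IsCoplanar] at hcop
    linear_combination -t * r * hcop + r * minor X' k * hexp.t_mul_Y -
      (minor X' k + t * minor Y' k) * hexp.X_mul_r +
      t * (X' 0 * minor Y' k - Y' 0 * minor X' k + (κ - k 0) * minor Y' X') * hexp.r_eq
  linear_combination hcurve - hXk - t * hYk

lemma IsBoundedTriple.norm_minor_x_sq_mul_max_one_le_of_chordSum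
    (h : Y ^ 2 = X ^ 3 + A * X + B) (hsum : ∀ i, IsChordSum X Y (a i) (b i) (X' i) (Y' i))
    (hκ : NormLePow M κ 1) (hcop : IsCoplanar X Y κ X' Y' k) :
    ‖minor a k‖ ^ 2 * max 1 ‖X‖ ≤ M ^ 300 := by
  have bound_ak := NormLePow.minor hT.norm_x hT.norm_label
  have bound_bk := NormLePow.minor hT.norm_y hT.norm_label
  rcases le_or_gt ‖X‖ (M ^ 20) with hX | hX
  · exact norm_sq_mul_max_one_le_of_le bound_ak hX (by decide)
  obtain ⟨t, r, w, hexp⟩ := exists_isExpansionAtInfinity hT.norm_A hT.norm_B h hX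
  obtain ⟨z, norm_z, hz⟩ := hexp.exists_minor_add_eq hT hsum hκ hcop
  have norm_t := hexp.norm_t
  have hquot : NormLePow M (t * z - 3 * minor b k) 149 :=
    .mono (by apply_rules [sub, mul, ofNat]) (by decide)
  refine hexp.norm_sq_mul_max_one_le hquot (by decide) ?_
  linear_combination hz

lemma IsBoundedTriple.norm_minor_y_sq_mul_max_one_le_of_chordSum (h3 : 1 ≤ M * ‖(3 : L)‖)
    (h : Y ^ 2 = X ^ 3 + A * X + B) (hsum : ∀ i, IsChordSum X Y (a i) (b i) (X' i) (Y' i))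
    (hκ : NormLePow M κ 1) (hcop : IsCoplanar X Y κ X' Y' k) (hminor : minor a k = 0) :
    ‖minor b k‖ ^ 2 * max 1 ‖X‖ ≤ M ^ 300 := by
  have bound_bk := NormLePow.minor hT.norm_y hT.norm_label
  rcases le_or_gt ‖X‖ (M ^ 20) with hX | hX
  · exact norm_sq_mul_max_one_le_of_le bound_bk hX (by decide)
  obtain ⟨t, r, w, hexp⟩ := exists_isExpansionAtInfinity hT.norm_A hT.norm_B h hX
  obtain ⟨z, norm_z, hz⟩ := hexp.exists_minor_add_eq hT hsum hκ hcop
  have three_ne : (3 : L) ≠ 0 := by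
    intro h0
    rw [h0, norm_zero, mul_zero] at h3
    exact zero_lt_one.not_ge h3
  have norm_inv_three : NormLePow M (3⁻¹ : L) 1 := by
    rw [NormLePow, norm_inv, pow_one]
    exact (inv_le_iff_one_le_mul₀ (norm_pos_iff.mpr three_ne)).mpr h3
  have hquot : NormLePow M (z * 3⁻¹) 149 := (norm_z.mul norm_inv_three).mono (by decide)
  refine hexp.norm_sq_mul_max_one_le hquot (by decide) ?_
  apply mul_left_cancel₀ hexp.t_ne_zero
  rw [hminor] at hz
  field_simp
  linear_combination hz

end Cluster

end AffineDependence

section Heights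

open Height Real AdmissibleAbsValues

universe u

variable {K : Type u} [Field K]

/-- An extension of `(K, v)` containing a twelfth root `μ` of `1 / D`, over which the curve of
discriminant `D` can be rescaled to have a discriminant of absolute value `1`. -/
structure LocalModel (v : AbsoluteValue K ℝ) (D : K) where
  /-- The extension field. -/
  L : Type u
  /-- The norm on the extension field. -/
  [normedField : NormedField L]
  /-- The embedding of `K`. -/
  ι : K →+* L
  /-- The twelfth root. -/
  μ : L
  norm_ι : ∀ x, ‖ι x‖ = v x
  μ_pow_mul : μ ^ 12 * ι D = 1

attribute [instance] LocalModel.normedField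

namespace LocalModel

variable {v : AbsoluteValue K ℝ} {D : K} (E : LocalModel v D)

/-- The image of a quantity of weight `n` under the rescaling by `μ`. -/
def scale (n : ℕ) (x : K) : E.L := E.ι x * E.μ ^ n

lemma μ_ne_zero : E.μ ≠ 0 := fun h ↦ by simpa [h] using E.μ_pow_mul

lemma ι_ne_zero : E.ι D ≠ 0 := right_ne_zero_of_mul_eq_one E.μ_pow_mul

lemma log_norm_μ : log ‖E.μ‖ = -(1 / 12) * log (v D) := by
  have h := congrArg (log ‖·‖) E.μ_pow_mul
  rw [norm_mul, norm_pow, norm_one, log_one,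
    log_mul (pow_ne_zero _ (norm_ne_zero_iff.mpr E.μ_ne_zero)) (norm_ne_zero_iff.mpr E.ι_ne_zero),
    log_pow, E.norm_ι] at h
  push_cast at h
  linarith

lemma minor_scale (n : ℕ) (a k : Fin 3 → K) :
    minor (fun i ↦ E.scale n (a i)) (fun i ↦ E.ι (k i)) = E.scale n (minor a k) := by
  simp only [minor, scale, map_sub, map_mul]; ring

lemma isCoplanar_scale {X Y κ : K} {a b k : Fin 3 → K} (h : IsCoplanar X Y κ a b k) :
    IsCoplanar (E.scale 2 X) (E.scale 3 Y) (E.ι κ) (fun i ↦ E.scale 2 (a i))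
      (fun i ↦ E.scale 3 (b i)) (fun i ↦ E.ι (k i)) := by
  have hι := congrArg E.ι h
  simp only [minor, map_add, map_mul, map_sub, map_zero] at hι
  simp only [IsCoplanar, minor, scale]
  linear_combination E.μ ^ 5 * hι

lemma equation_scale [CharZero K] {W : WeierstrassCurve K} {P : W.toAffine.Point}
    (hP : P ≠ 0) : E.scale 3 (shortY P) ^ 2 = E.scale 2 (shortX P) ^ 3 +
      E.scale 4 (shortA W) * E.scale 2 (shortX P) + E.scale 6 (shortB W) := by
  have hι := congrArg E.ι (shortY_sq hP)
  simp only [map_add, map_mul, map_pow] at hι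
  simp only [scale]
  linear_combination E.μ ^ 6 * hι

lemma scale_shortX_add_self [CharZero K] [DecidableEq K] {W : WeierstrassCurve K}
    {P : W.toAffine.Point} (hP : P ≠ 0) (hY : shortY P ≠ 0) :
    E.scale 2 (shortX (P + P)) * (4 * (E.scale 2 (shortX P) ^ 3 +
        E.scale 4 (shortA W) * E.scale 2 (shortX P) + E.scale 6 (shortB W))) =
      E.scale 2 (shortX P) ^ 4 - 2 * E.scale 4 (shortA W) * E.scale 2 (shortX P) ^ 2 -
        8 * E.scale 6 (shortB W) * E.scale 2 (shortX P) + E.scale 4 (shortA W) ^ 2 := by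
  have hι := congrArg E.ι (shortX_add_self_mul hP hY)
  simp only [map_add, map_mul, map_pow, map_sub, map_ofNat] at hι
  simp only [scale]
  linear_combination E.μ ^ 8 * hι

lemma isChordSum_scale [CharZero K] [DecidableEq K] {W : WeierstrassCurve K}
    {P T : W.toAffine.Point} (hP : P ≠ 0) (hT : T ≠ 0) :
    IsChordSum (E.scale 2 (shortX P)) (E.scale 3 (shortY P)) (E.scale 2 (shortX T))
      (E.scale 3 (shortY T)) (E.scale 2 (shortX (P + T))) (E.scale 3 (shortY (P + T))) := by
  intro hne
  have hX : shortX T ≠ shortX P := fun hX ↦ hne (by rw [hX])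
  have hslope : (E.scale 3 (shortY T) - E.scale 3 (shortY P)) /
        (E.scale 2 (shortX T) - E.scale 2 (shortX P)) =
      E.scale 1 ((shortY T - shortY P) / (shortX T - shortX P)) := by
    have hι : E.ι (shortX T) - E.ι (shortX P) ≠ 0 :=
      sub_ne_zero.mpr fun h ↦ hX (E.ι.injective h)
    have hμ := E.μ_ne_zero
    simp only [scale, map_div₀, map_sub]
    rw [← sub_mul, ← sub_mul]
    field_simp
  rw [hslope, add_comm P T, shortY_add hT hP hX, shortX_add hT hP hX]
  constructor <;> simp only [scale, map_sub, map_pow, map_neg, map_add, map_mul] <;> ring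

/-- After rescaling, the curve `y² = x³ + Ax + B` has coefficients bounded by `M` and discriminant
not much smaller than `1`. -/
structure IsBounded (A B : K) (M : ℝ) : Prop where
  isQuasiUltrametric : IsQuasiUltrametric E.L M
  norm_A : NormLePow M (E.scale 4 A) 1
  norm_B : NormLePow M (E.scale 6 B) 1
  one_le_mul_norm_three : 1 ≤ M * ‖(3 : E.L)‖
  one_le_mul_norm_disc : 1 ≤ M ^ 10 * ‖4 * (4 * E.scale 4 A ^ 3 + 27 * E.scale 6 B ^ 2)‖

lemma IsBounded.mono {E : LocalModel v D} {A B : K} {M M' : ℝ} (hE : E.IsBounded A B M)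
    (hM : M ≤ M') : E.IsBounded A B M' := by
  have := hE.isQuasiUltrametric
  have one_le : 1 ≤ M := IsQuasiUltrametric.one_le E.L
  have pow_le (n : ℕ) : M ^ n ≤ M' ^ n := pow_le_pow_left₀ (zero_le_one.trans one_le) hM n
  exact
    { isQuasiUltrametric := hE.isQuasiUltrametric.mono hM
      norm_A := hE.norm_A.trans (pow_le 1)
      norm_B := hE.norm_B.trans (pow_le 1)
      one_le_mul_norm_three := hE.one_le_mul_norm_three.trans (by gcongr)
      one_le_mul_norm_disc := hE.one_le_mul_norm_disc.trans (by gcongr) }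

end LocalModel

variable [AdmissibleAbsValues K]

/-- `v` is one of the absolute values of `K` entering the product formula. -/
def IsPlace (v : AbsoluteValue K ℝ) : Prop :=
  v ∈ archAbsVal (K := K) ∨ v ∈ nonarchAbsVal (K := K)

variable (K) in
/-- Real functions of a place with finite support on the nonarchimedean places. They are extended
to all absolute values, so that evaluation needs no proof that an absolute value is a place. -/
def PlaceFun : Submodule ℝ (AbsoluteValue K ℝ → ℝ) where
  carrier := {f | (Function.support fun v : nonarchAbsVal (K := K) ↦ f v).Finite}
  add_mem' hf hg := (hf.union hg).subset (Function.support_add _ _)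
  zero_mem' := by simp
  smul_mem' c f hf := hf.subset fun v hv ↦ right_ne_zero_of_mul (a := c) hv

/-- The sum of a function over all places. -/
noncomputable def placeSum : PlaceFun K →ₗ[ℝ] ℝ where
  toFun f := ((archAbsVal (K := K)).map f.1).sum + ∑ᶠ v : nonarchAbsVal (K := K), f.1 v
  map_add' f g := by
    have hfin : ∑ᶠ v : nonarchAbsVal (K := K), (f + g).1 v =
        ∑ᶠ v : nonarchAbsVal (K := K), f.1 v + ∑ᶠ v : nonarchAbsVal (K := K), g.1 v :=
      finsum_add_distrib f.2 g.2
    rw [hfin, Submodule.coe_add, Pi.add_def, Multiset.sum_map_add]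
    ring
  map_smul' c f := by
    have hfin : ∑ᶠ v : nonarchAbsVal (K := K), (c • f).1 v =
        c * ∑ᶠ v : nonarchAbsVal (K := K), f.1 v :=
      (mul_finsum _ c).symm
    rw [hfin, Submodule.coe_smul, Pi.smul_def, RingHom.id_apply, smul_eq_mul, mul_add,
      ← Multiset.sum_map_mul_left]
    rfl

lemma placeSum_mono {f g : PlaceFun K} (h : ∀ v, IsPlace v → f.1 v ≤ g.1 v) :
    placeSum f ≤ placeSum g :=
  add_le_add (Multiset.sum_map_le_sum_map _ _ fun v hv ↦ h v (.inl hv))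
    (finsum_le_finsum' f.2 g.2 fun v ↦ h v.1 (.inr v.2))

/-- The function `v ↦ log |x|_v`; it is `0` for `x = 0`. -/
noncomputable def logAbs (x : K) : PlaceFun K where
  val v := log (v x)
  property := by
    rcases eq_or_ne x 0 with rfl | hx
    · simp only [map_zero, log_zero]
      exact zero_mem _
    refine (hasFiniteMulSupport hx).subset fun v hv hv' ↦ hv ?_
    exact log_eq_zero.mpr (.inr (.inl hv'))

lemma placeSum_logAbs (x : K) : placeSum (logAbs x) = 0 := by
  rcases eq_or_ne x 0 with rfl | hx
  · simp [placeSum, logAbs]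
  have hprod := product_formula (K := K) hx
  have hne := hprod.trans_ne one_ne_zero
  have hlog := congrArg log hprod
  rw [log_one, log_mul (left_ne_zero_of_mul hne) (right_ne_zero_of_mul hne),
    log_finprod (fun v ↦ v.1.pos hx), log_multiset_prod, Multiset.map_map] at hlog
  · exact hlog
  · intro a ha
    obtain ⟨v, -, rfl⟩ := Multiset.mem_map.mp ha
    exact v.ne_zero hx

/-- The function `v ↦ log⁺ |x|_v`. -/
noncomputable def posLogAbs (x : K) : PlaceFun K where
  val v := log⁺ (v x)
  property := by
    refine (logAbs x).2.subset fun v hv hv' ↦ hv ?_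
    change log (v.1 x) = 0 at hv'
    simp only [posLog, hv', max_self]

lemma posLogAbs_nonneg (x : K) (v : AbsoluteValue K ℝ) : 0 ≤ (posLogAbs x).1 v := posLog_nonneg

lemma placeSum_posLogAbs (x : K) : placeSum (posLogAbs x) = logHeight₁ x := (logHeight₁_eq x).symm

/-- The local heights `1/6 log⁺ |x⁶ / D|_v`, that is, `log⁺ |x / D^(1/6)|_v`. -/
noncomputable def localHeight (D x : K) : PlaceFun K := (1 / 6 : ℝ) • posLogAbs (x ^ 6 / D)

lemma localHeight_nonneg (D x : K) (v : AbsoluteValue K ℝ) : 0 ≤ (localHeight D x).1 v :=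
  mul_nonneg (by norm_num) (posLogAbs_nonneg _ v)

namespace LocalModel

variable {v : AbsoluteValue K ℝ} {D : K} (E : LocalModel v D)

lemma norm_scale_eq_exp {x : K} (hx : x ≠ 0) (n : ℕ) :
    ‖E.scale n x‖ = exp ((logAbs x - (n / 12 : ℝ) • logAbs D).1 v) := by
  have hμ : ‖E.μ‖ = exp (-(1 / 12) * log (v D)) := by
    rw [← E.log_norm_μ, exp_log (norm_pos_iff.mpr E.μ_ne_zero)]
  rw [scale, norm_mul, norm_pow, E.norm_ι, hμ, ← exp_log (v.pos hx), ← exp_nat_mul, ← exp_add]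
  congr 1
  change _ = log (v x) - n / 12 * log (v D)
  ring

lemma max_one_norm_scale_eq_exp (x : K) :
    max 1 ‖E.scale 2 x‖ = exp ((localHeight D x).1 v) := by
  have hpow : v (x ^ 6 / D) = ‖E.scale 2 x‖ ^ 6 := by
    rw [← E.norm_ι, ← norm_pow, map_div₀, map_pow]
    congr 1
    rw [div_eq_iff E.ι_ne_zero, scale]
    linear_combination -(E.ι x) ^ 6 * E.μ_pow_mul
  have hheight : (localHeight D x).1 v = log (max 1 ‖E.scale 2 x‖) := by
    change 1 / 6 * log⁺ (v (x ^ 6 / D)) = _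
    rw [hpow, posLog_pow, posLog_eq_log_max_one (norm_nonneg _)]
    push_cast
    ring
  rw [hheight, exp_log (by positivity)]

lemma norm_cubic_eq_exp [CharZero K] {W : WeierstrassCurve K} {P : W.toAffine.Point} (hP : P ≠ 0)
    (hY : shortY P ≠ 0) :
    ‖4 * (E.scale 2 (shortX P) ^ 3 + E.scale 4 (shortA W) * E.scale 2 (shortX P) +
      E.scale 6 (shortB W))‖ =
      exp ((logAbs (4 * shortY P ^ 2) - (6 / 12 : ℝ) • logAbs D).1 v) := by
  have hscale : 4 * E.scale 3 (shortY P) ^ 2 = E.scale 6 (4 * shortY P ^ 2) := by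
    simp only [scale, map_mul, map_pow, map_ofNat]; ring
  rw [← E.equation_scale hP, hscale,
    E.norm_scale_eq_exp (mul_ne_zero (by norm_num) (pow_ne_zero 2 hY)) 6, Nat.cast_ofNat]

lemma normLePow_scale_two {x : K} {m : ℝ} (h : (localHeight D x).1 v ≤ m) :
    NormLePow (exp m) (E.scale 2 x) 1 := by
  rw [NormLePow, pow_one]
  calc ‖E.scale 2 x‖ ≤ max 1 ‖E.scale 2 x‖ := le_max_right _ _
    _ = exp ((localHeight D x).1 v) := E.max_one_norm_scale_eq_exp x
    _ ≤ exp m := exp_le_exp.mpr h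

lemma normLePow_ι {x : K} {m : ℝ} (h : (posLogAbs x).1 v ≤ m) :
    NormLePow (exp m) (E.ι x) 1 := by
  rw [NormLePow, pow_one, E.norm_ι]
  calc v x ≤ max 1 (v x) := le_max_right _ _
    _ = exp (log⁺ (v x)) := by
        rw [posLog_eq_log_max_one (v.nonneg x), exp_log (by positivity)]
    _ ≤ exp m := exp_le_exp.mpr h

end LocalModel

/-- At every place `v` the curve `y² = x³ + Ax + B` has a local model bounded by `exp (s v)`. -/
def HasBoundedLocalModels (A B D : K) (s : PlaceFun K) : Prop :=
  ∀ v, IsPlace v → ∃ E : LocalModel v D, E.IsBounded A B (exp (s.1 v))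

namespace HasBoundedLocalModels

variable {A B D : K} {s : PlaceFun K}

lemma nonneg (h : HasBoundedLocalModels A B D s) {v : AbsoluteValue K ℝ} (hv : IsPlace v) :
    0 ≤ s.1 v := by
  obtain ⟨E, hE⟩ := h v hv
  have := hE.isQuasiUltrametric
  exact one_le_exp_iff.mp (IsQuasiUltrametric.one_le E.L)

lemma placeSum_nonneg (h : HasBoundedLocalModels A B D s) : 0 ≤ placeSum s :=
  (map_zero placeSum).symm.trans_le (placeSum_mono fun _ hv ↦ h.nonneg hv)

end HasBoundedLocalModels

lemma placeSum_localHeight_le_of_norm_le {D X e : K} {m : PlaceFun K} {n c : ℕ} (he : e ≠ 0)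
    (hloc : ∀ v, IsPlace v → ∃ E : LocalModel v D,
      ‖E.scale n e‖ ^ 2 * max 1 ‖E.scale 2 X‖ ≤ exp (m.1 v) ^ c) :
    placeSum (localHeight D X) ≤ c * placeSum m := by
  have hle : placeSum ((2 : ℝ) • (logAbs e - (n / 12 : ℝ) • logAbs D) + localHeight D X) ≤
      placeSum ((c : ℝ) • m) := by
    refine placeSum_mono fun v hv ↦ ?_
    obtain ⟨E, hE⟩ := hloc v hv
    rw [E.norm_scale_eq_exp he, E.max_one_norm_scale_eq_exp] at hE
    rwa [← exp_nat_mul, ← exp_nat_mul, ← exp_add, exp_le_exp] at hE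
  simpa only [map_add, map_sub, map_smul, placeSum_logAbs, smul_eq_mul, mul_zero, sub_zero,
    zero_add] using hle

section Points

variable {W : WeierstrassCurve K} {D : K} {s : PlaceFun K}

/-- The height of a point, normalised by `D` so as to be invariant under quadratic twists if `D` is
the discriminant. -/
noncomputable def pointHeight (D : K) (P : W.toAffine.Point) : ℝ :=
  placeSum (localHeight D (shortX P))

lemma pointHeight_eq (D : K) (P : W.toAffine.Point) :
    pointHeight D P = 1 / 6 * logHeight₁ (shortX P ^ 6 / D) := by
  rw [pointHeight, localHeight, map_smul, placeSum_posLogAbs, smul_eq_mul]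

lemma pointHeight_nonneg (D : K) (P : W.toAffine.Point) : 0 ≤ pointHeight D P := by
  rw [pointHeight_eq]
  exact mul_nonneg (by norm_num) (zero_le_logHeight₁ _)

@[simp]
lemma pointHeight_zero (D : K) : pointHeight D (0 : W.toAffine.Point) = 0 := by
  simp [pointHeight_eq]

@[simp]
lemma pointHeight_neg (D : K) (P : W.toAffine.Point) : pointHeight D (-P) = pointHeight D P := by
  rw [pointHeight, pointHeight, shortX_neg]

section Parallelogram

variable [CharZero K] (h : HasBoundedLocalModels (shortA W) (shortB W) D s)
include h

lemma pointHeight_le_of_shortY_eq_zero {P : W.toAffine.Point} (hP : P ≠ 0) (hY : shortY P = 0) :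
    pointHeight D P ≤ placeSum s := by
  refine placeSum_mono fun v hv ↦ ?_
  obtain ⟨E, hE⟩ := h v hv
  have := hE.isQuasiUltrametric
  have hroot := E.equation_scale hP
  rw [hY, show E.scale 3 0 = 0 by simp [LocalModel.scale], zero_pow two_ne_zero, eq_comm] at hroot
  have hmax := max_one_norm_le_of_cubic_eq_zero hE.norm_A hE.norm_B hroot
  rwa [E.max_one_norm_scale_eq_exp, exp_le_exp] at hmax

variable [DecidableEq K]

lemma pointHeight_add_self_le (P : W.toAffine.Point) :
    pointHeight D (P + P) ≤ 4 * pointHeight D P + 50 * placeSum s := by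
  have hpos := pointHeight_nonneg D P
  have hs := h.placeSum_nonneg
  rcases eq_or_ne P 0 with rfl | hP
  · simpa using hs
  rcases eq_or_ne (shortY P) 0 with hY | hY
  · rw [add_self_eq_zero_of_shortY_eq_zero hY, pointHeight_zero]
    positivity
  have hle : placeSum (localHeight D (shortX (P + P)) +
        (logAbs (4 * shortY P ^ 2) - (6 / 12 : ℝ) • logAbs D)) ≤
      placeSum ((50 : ℝ) • s + (4 : ℝ) • localHeight D (shortX P)) := by
    refine placeSum_mono fun v hv ↦ ?_
    obtain ⟨E, hE⟩ := h v hv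
    have := hE.isQuasiUltrametric
    have hloc := max_one_mul_norm_dup_le hE.norm_A hE.norm_B (E.scale_shortX_add_self hP hY)
    rw [E.norm_cubic_eq_exp hP hY, E.max_one_norm_scale_eq_exp, E.max_one_norm_scale_eq_exp,
      ← exp_nat_mul, ← exp_nat_mul, ← exp_add, ← exp_add, exp_le_exp] at hloc
    push_cast at hloc
    exact hloc
  simp only [map_add, map_sub, map_smul, placeSum_logAbs, smul_eq_mul] at hle
  simp only [pointHeight]
  linarith

lemma four_mul_pointHeight_le (P : W.toAffine.Point) :
    4 * pointHeight D P ≤ pointHeight D (P + P) + 50 * placeSum s := by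
  have hs := h.placeSum_nonneg
  rcases eq_or_ne P 0 with rfl | hP
  · simpa using hs
  rcases eq_or_ne (shortY P) 0 with hY | hY
  · rw [add_self_eq_zero_of_shortY_eq_zero hY, pointHeight_zero]
    linarith [pointHeight_le_of_shortY_eq_zero h hP hY]
  have hle : placeSum ((4 : ℝ) • localHeight D (shortX P)) ≤
      placeSum ((50 : ℝ) • s + (localHeight D (shortX (P + P)) +
        (logAbs (4 * shortY P ^ 2) - (6 / 12 : ℝ) • logAbs D))) := by
    refine placeSum_mono fun v hv ↦ ?_
    obtain ⟨E, hE⟩ := h v hv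
    have := hE.isQuasiUltrametric
    have hloc := le_max_one_mul_norm_dup hE.norm_A hE.norm_B hE.one_le_mul_norm_disc
      (E.scale_shortX_add_self hP hY)
    rw [E.norm_cubic_eq_exp hP hY, E.max_one_norm_scale_eq_exp, E.max_one_norm_scale_eq_exp,
      ← exp_nat_mul, ← exp_nat_mul, ← exp_add, ← exp_add, exp_le_exp] at hloc
    push_cast at hloc
    exact hloc
  simp only [map_add, map_sub, map_smul, placeSum_logAbs, smul_eq_mul] at hle
  simp only [pointHeight]
  linarith

lemma pointHeight_add_add_sub_le_of_shortX_ne {P Q : W.toAffine.Point} (hP : P ≠ 0) (hQ : Q ≠ 0)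
    (hX : shortX P ≠ shortX Q) : pointHeight D (P + Q) + pointHeight D (P - Q) ≤
      2 * (pointHeight D P + pointHeight D Q) + 20 * placeSum s := by
  have hle : placeSum (localHeight D (shortX (P + Q)) + localHeight D (shortX (P - Q)) +
        (2 : ℝ) • (logAbs (shortX P - shortX Q) - (2 / 12 : ℝ) • logAbs D)) ≤
      placeSum ((20 : ℝ) • s +
        ((2 : ℝ) • localHeight D (shortX P) + (2 : ℝ) • localHeight D (shortX Q))) := by
    refine placeSum_mono fun v hv ↦ ?_
    obtain ⟨E, hE⟩ := h v hv
    have := hE.isQuasiUltrametric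
    have hsum := congrArg E.ι (shortX_add_add_shortX_sub_mul hP hQ hX)
    have hprod := congrArg E.ι (shortX_add_mul_shortX_sub_mul hP hQ hX)
    simp only [map_add, map_mul, map_pow, map_sub, map_ofNat] at hsum hprod
    have hloc := max_one_mul_max_one_mul_norm_sub_sq_le hE.norm_A hE.norm_B
      (x₁ := E.scale 2 (shortX P)) (x₂ := E.scale 2 (shortX Q))
      (x₃ := E.scale 2 (shortX (P + Q))) (x₄ := E.scale 2 (shortX (P - Q)))
      (by simp only [LocalModel.scale]; linear_combination E.μ ^ 6 * hsum)
      (by simp only [LocalModel.scale]; linear_combination E.μ ^ 8 * hprod)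
    have hscale : E.scale 2 (shortX P) - E.scale 2 (shortX Q) =
        E.scale 2 (shortX P - shortX Q) := by
      rw [LocalModel.scale, LocalModel.scale, ← sub_mul, ← map_sub, LocalModel.scale]
    simp only [hscale, E.norm_scale_eq_exp (sub_ne_zero.mpr hX), E.max_one_norm_scale_eq_exp,
      ← exp_nat_mul, ← exp_add, exp_le_exp] at hloc
    push_cast at hloc
    exact hloc
  simp only [map_add, map_sub, map_smul, placeSum_logAbs, smul_eq_mul] at hle
  simp only [pointHeight]
  linarith

lemma pointHeight_add_add_sub_le (P Q : W.toAffine.Point) :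
    pointHeight D (P + Q) + pointHeight D (P - Q) ≤
      2 * (pointHeight D P + pointHeight D Q) + 50 * placeSum s := by
  have hs := h.placeSum_nonneg
  rcases eq_or_ne P 0 with rfl | hP
  · rw [zero_add, zero_sub, pointHeight_neg, pointHeight_zero]
    linarith
  rcases eq_or_ne Q 0 with rfl | hQ
  · rw [add_zero, sub_zero, pointHeight_zero]
    linarith
  by_cases hX : shortX P = shortX Q
  · have hdouble := pointHeight_add_self_le h P
    obtain rfl | rfl : Q = P ∨ Q = -P := eq_or_eq_neg_of_shortX_eq hQ hP hX.symm
    · rw [sub_self, pointHeight_zero]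
      linarith
    · rw [add_neg_cancel, sub_neg_eq_add, pointHeight_zero, pointHeight_neg]
      linarith
  · linarith [pointHeight_add_add_sub_le_of_shortX_ne h hP hQ hX]

-- The lower bound is the upper bound for `P + Q` and `P - Q`, whose sum and difference are
-- `2 • P` and `2 • Q`.
lemma isAlmostQuadratic_pointHeight :
    IsAlmostQuadratic (pointHeight D (W := W)) (100 * placeSum s) := by
  intro P Q
  have hs := h.placeSum_nonneg
  have hupper := pointHeight_add_add_sub_le h P Q
  have hlower := pointHeight_add_add_sub_le h (P + Q) (P - Q)
  rw [add_add_sub_cancel, add_sub_sub_cancel] at hlower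
  have hP := four_mul_pointHeight_le h P
  have hQ := four_mul_pointHeight_le h Q
  exact abs_le.mpr ⟨by linarith, by linarith⟩


end Parallelogram

section Labels

variable {P : W.toAffine.Point} {Q : Fin 3 → W.toAffine.Point} {κ : K} {k : Fin 3 → K}

/-- A bound, at each place, for the size of a curve with points of abscissae `a i` and labels
`k i` and `κ`. -/
noncomputable def dataBound (s : PlaceFun K) (D : K) (a : Fin 3 → K) (κ : K) (k : Fin 3 → K) :
    PlaceFun K :=
  s + ∑ i, localHeight D (a i) + posLogAbs κ + ∑ i, posLogAbs (k i)

lemma placeSum_dataBound (s : PlaceFun K) (D : K) (Q : Fin 3 → W.toAffine.Point) (κ : K)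
    (k : Fin 3 → K) : placeSum (dataBound s D (fun i ↦ shortX (Q i)) κ k) =
      placeSum s + ∑ i, pointHeight D (Q i) + logHeight₁ κ + ∑ i, logHeight₁ (k i) := by
  simp only [dataBound, map_add, map_sum, placeSum_posLogAbs, pointHeight]

lemma dataBound_apply (s : PlaceFun K) (D : K) (a : Fin 3 → K) (κ : K) (k : Fin 3 → K)
    (v : AbsoluteValue K ℝ) : (dataBound s D a κ k).1 v = s.1 v + ∑ i, (localHeight D (a i)).1 v +
      (posLogAbs κ).1 v + ∑ i, (posLogAbs (k i)).1 v := by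
  simp only [dataBound, Submodule.coe_add, Submodule.coe_sum, Pi.add_apply, Finset.sum_apply]

variable [CharZero K] (h : HasBoundedLocalModels (shortA W) (shortB W) D s)
include h

lemma exists_isBoundedTriple (hQ : ∀ i, Q i ≠ 0) (κ : K) (k : Fin 3 → K) {v : AbsoluteValue K ℝ}
    (hv : IsPlace v) : ∃ (E : LocalModel v D) (M : ℝ),
      M = exp ((dataBound s D (fun i ↦ shortX (Q i)) κ k).1 v) ∧
      IsQuasiUltrametric E.L M ∧ 1 ≤ M * ‖(3 : E.L)‖ ∧ NormLePow M (E.ι κ) 1 ∧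
      IsBoundedTriple M (E.scale 4 (shortA W)) (E.scale 6 (shortB W))
        (fun i ↦ E.scale 2 (shortX (Q i))) (fun i ↦ E.scale 3 (shortY (Q i)))
        (fun i ↦ E.ι (k i)) := by
  obtain ⟨E, hE⟩ := h v hv
  have hbound := dataBound_apply s D (fun i ↦ shortX (Q i)) κ k v
  have hs := h.nonneg hv
  have hκ := posLogAbs_nonneg κ v
  have hx_sum : 0 ≤ ∑ i, (localHeight D (shortX (Q i))).1 v :=
    Finset.sum_nonneg fun i _ ↦ localHeight_nonneg _ _ v
  have hk_sum : 0 ≤ ∑ i, (posLogAbs (k i)).1 v :=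
    Finset.sum_nonneg fun i _ ↦ posLogAbs_nonneg _ v
  have hx (i) : (localHeight D (shortX (Q i))).1 v ≤ ∑ i, (localHeight D (shortX (Q i))).1 v :=
    Finset.single_le_sum (f := fun i ↦ (localHeight D (shortX (Q i))).1 v)
      (fun i _ ↦ localHeight_nonneg _ _ v) (Finset.mem_univ i)
  have hk (i) : (posLogAbs (k i)).1 v ≤ ∑ i, (posLogAbs (k i)).1 v :=
    Finset.single_le_sum (f := fun i ↦ (posLogAbs (k i)).1 v)
      (fun i _ ↦ posLogAbs_nonneg _ v) (Finset.mem_univ i)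
  replace hE := hE.mono (M' := exp ((dataBound s D (fun i ↦ shortX (Q i)) κ k).1 v))
    (exp_le_exp.mpr (by linarith))
  exact ⟨E, _, rfl, hE.isQuasiUltrametric, hE.one_le_mul_norm_three,
    E.normLePow_ι (by linarith),
    { norm_A := hE.norm_A
      norm_B := hE.norm_B
      norm_x := fun i ↦ E.normLePow_scale_two (by linarith [hx i])
      equation := fun i ↦ E.equation_scale (hQ i)
      norm_label := fun i ↦ E.normLePow_ι (by linarith [hk i]) }⟩

-- A line with bounded coefficients through a point near infinity is nearly vertical, so the point
-- `P` cannot be much larger than the three points spanning the plane.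
lemma pointHeight_le_of_isCoplanar (hP : P ≠ 0) (hQ : ∀ i, Q i ≠ 0)
    (hcop : IsCoplanar (shortX P) (shortY P) κ (fun i ↦ shortX (Q i)) (fun i ↦ shortY (Q i)) k)
    (hne : minor (fun i ↦ shortX (Q i)) k ≠ 0 ∨ minor (fun i ↦ shortY (Q i)) k ≠ 0) :
    pointHeight D P ≤ 50 * (placeSum s + ∑ i, pointHeight D (Q i) + logHeight₁ κ +
      ∑ i, logHeight₁ (k i)) := by
  rw [← placeSum_dataBound]
  by_cases hx : minor (fun i ↦ shortX (Q i)) k = 0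
  · refine placeSum_localHeight_le_of_norm_le (n := 3) (hne.resolve_left (not_not.mpr hx))
      fun v hv ↦ ?_
    obtain ⟨E, M, rfl, _, -, hκ, hT⟩ := exists_isBoundedTriple h hQ κ k hv
    have hloc := hT.norm_minor_y_sq_mul_max_one_le (E.equation_scale hP) hκ
      (E.isCoplanar_scale hcop) (by rw [E.minor_scale, hx]; simp [LocalModel.scale])
    exact ⟨E, by rwa [E.minor_scale] at hloc⟩
  · refine placeSum_localHeight_le_of_norm_le (n := 2) hx fun v hv ↦ ?_
    obtain ⟨E, M, rfl, _, -, hκ, hT⟩ := exists_isBoundedTriple h hQ κ k hv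
    have hloc := hT.norm_minor_x_sq_mul_max_one_le (E.equation_scale hP) hκ
      (E.isCoplanar_scale hcop)
    exact ⟨E, by rwa [E.minor_scale] at hloc⟩

lemma pointHeight_le_of_isCoplanar_add [DecidableEq K] (hP : P ≠ 0) (hQ : ∀ i, Q i ≠ 0)
    (hcop : IsCoplanar (shortX P) (shortY P) κ (fun i ↦ shortX (P + Q i))
      (fun i ↦ shortY (P + Q i)) k)
    (hne : minor (fun i ↦ shortX (Q i)) k ≠ 0 ∨ minor (fun i ↦ shortY (Q i)) k ≠ 0) :
    pointHeight D P ≤ 300 * (placeSum s + ∑ i, pointHeight D (Q i) + logHeight₁ κ +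
      ∑ i, logHeight₁ (k i)) := by
  rw [← placeSum_dataBound]
  by_cases hx : minor (fun i ↦ shortX (Q i)) k = 0
  · refine placeSum_localHeight_le_of_norm_le (n := 3) (hne.resolve_left (not_not.mpr hx))
      fun v hv ↦ ?_
    obtain ⟨E, M, rfl, _, h3, hκ, hT⟩ := exists_isBoundedTriple h hQ κ k hv
    have hloc := hT.norm_minor_y_sq_mul_max_one_le_of_chordSum h3 (E.equation_scale hP)
      (fun i ↦ E.isChordSum_scale hP (hQ i)) hκ (E.isCoplanar_scale hcop)
      (by rw [E.minor_scale, hx]; simp [LocalModel.scale])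
    exact ⟨E, by rwa [E.minor_scale] at hloc⟩
  · refine placeSum_localHeight_le_of_norm_le (n := 2) hx fun v hv ↦ ?_
    obtain ⟨E, M, rfl, _, -, hκ, hT⟩ := exists_isBoundedTriple h hQ κ k hv
    have hloc := hT.norm_minor_x_sq_mul_max_one_le_of_chordSum (E.equation_scale hP)
      (fun i ↦ E.isChordSum_scale hP (hQ i)) hκ (E.isCoplanar_scale hcop)
    exact ⟨E, by rwa [E.minor_scale] at hloc⟩

end Labels

end Points

end Heights

/-! ### Points with labels of small height -/

section Collinear

variable {K : Type*} [Field K] {A B : K}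

open Polynomial in
-- A line meets the cubic in at most three points, so four points of a parametrised line on the
-- cubic force the parametrisation to be constant.
lemma direction_eq_zero_of_sq_eq_cubic {x y β δ : K} {t : Fin 4 → K}
    (ht : Function.Injective t)
    (h : ∀ i, (y + δ * t i) ^ 2 = (x + β * t i) ^ 3 + A * (x + β * t i) + B) :
    β = 0 ∧ δ = 0 := by
  let p : Cubic K := ⟨-β ^ 3, δ ^ 2 - 3 * x * β ^ 2, 2 * y * δ - 3 * x ^ 2 * β - A * β,
    y ^ 2 - x ^ 3 - A * x - B⟩
  have hroots (i) : p.toPoly.eval (t i) = 0 := by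
    simp only [p, Cubic.toPoly, eval_add, eval_mul, eval_C, eval_pow, eval_X]
    linear_combination h i
  have hdeg : p.toPoly.natDegree < Fintype.card (Fin 4) := by
    rw [Fintype.card_fin, Nat.lt_succ_iff]; exact natDegree_cubic_le
  have hp : p = 0 := p.toPoly_eq_zero_iff.mp <|
    eq_zero_of_natDegree_lt_card_of_eval_eq_zero _ ht hroots hdeg
  have ha : -β ^ 3 = 0 := congrArg Cubic.a hp
  have hb : δ ^ 2 - 3 * x * β ^ 2 = 0 := congrArg Cubic.b hp
  have hβ : β = 0 := by simpa using ha
  exact ⟨hβ, by simpa [hβ] using hb⟩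

lemma eq_add_div_mul_of_minor_eq_zero {a k : Fin 3 → K} (hk : k 1 ≠ k 0) (h : minor a k = 0) :
    a 2 = a 0 + (a 1 - a 0) / (k 1 - k 0) * (k 2 - k 0) := by
  have hk' := sub_ne_zero.mpr hk
  rw [minor] at h
  field_simp
  linear_combination -h

lemma exists_minor_ne_zero {a b k : Fin 4 → K} (hk : Function.Injective k)
    (heq : ∀ i, b i ^ 2 = a i ^ 3 + A * a i + B) (hne : a 1 = a 0 → b 1 ≠ b 0) :
    ∃ e : Fin 3 → Fin 4, minor (a ∘ e) (k ∘ e) ≠ 0 ∨ minor (b ∘ e) (k ∘ e) ≠ 0 := by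
  by_contra! hcol
  have hk10 : k 1 ≠ k 0 := hk.ne (by decide)
  have ha (i) := eq_add_div_mul_of_minor_eq_zero (k := k ∘ ![0, 1, i]) hk10 (hcol ![0, 1, i]).1
  have hb (i) := eq_add_div_mul_of_minor_eq_zero (k := k ∘ ![0, 1, i]) hk10 (hcol ![0, 1, i]).2
  simp only [Function.comp_apply, Matrix.cons_val] at ha hb
  obtain ⟨hβ, hδ⟩ := direction_eq_zero_of_sq_eq_cubic (t := fun i ↦ k i - k 0)
    (β := (a 1 - a 0) / (k 1 - k 0)) (δ := (b 1 - b 0) / (k 1 - k 0))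
    ((sub_left_injective (b := k 0)).comp hk) fun i ↦ by rw [← hb, ← ha]; exact heq i
  exact hne (by rw [ha 1, hβ]; ring) (by rw [hb 1, hδ]; ring)

end Collinear

section Labelling

open Height

variable {K : Type*} [Field K] {W : WeierstrassCurve K} {u v w : K}

/-- The value `uY + vX + w` of an affine function at a point. For points whose `x`- or
`y`-coordinates form an arithmetic progression, a suitable label of the `i`-th point is `i`. -/
def label (u v w : K) (P : W.toAffine.Point) : K := u * shortY P + v * shortX P + w

lemma isCoplanar_label (u v w : K) (P : W.toAffine.Point) (Q : Fin 3 → W.toAffine.Point) :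
    IsCoplanar (shortX P) (shortY P) (label u v w P) (fun i ↦ shortX (Q i)) (fun i ↦ shortY (Q i))
      fun i ↦ label u v w (Q i) := by
  unfold IsCoplanar minor label; ring

variable [AdmissibleAbsValues K]

/-- A finite set of affine points distinguished by their labels, which have height at most `ℓ`. -/
structure IsLabelled (S : Finset W.toAffine.Point) (u v w : K) (ℓ : ℝ) : Prop where
  ne_zero : ∀ P ∈ S, P ≠ 0
  injOn : Set.InjOn (label u v w) (S : Set W.toAffine.Point)
  logHeight_le : ∀ P ∈ S, logHeight₁ (label u v w P) ≤ ℓ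

namespace IsLabelled

variable [CharZero K] {S t : Finset W.toAffine.Point} {ℓ : ℝ}
  (hS : IsLabelled S u v w ℓ)
include hS

lemma exists_minor_sub_ne_zero [DecidableEq K] (hts : t ⊆ S) (ht : t.card = 4)
    {P : W.toAffine.Point} (hP : P ∉ t) : ∃ Q : Fin 3 → W.toAffine.Point, (∀ i, Q i ∈ t) ∧
      (minor (fun i ↦ shortX (Q i - P)) (fun i ↦ label u v w (Q i)) ≠ 0 ∨
        minor (fun i ↦ shortY (Q i - P)) (fun i ↦ label u v w (Q i)) ≠ 0) := by
  let T (i : Fin 4) : W.toAffine.Point := (Finset.equivFinOfCardEq ht).symm i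
  have hT (i) : T i ∈ t := Subtype.coe_prop _
  have hTinj : Function.Injective T := Subtype.val_injective.comp (Equiv.injective _)
  have hT0 (i) : T i - P ≠ 0 := sub_ne_zero.mpr fun h ↦ hP (h ▸ hT i)
  obtain ⟨e, he⟩ := exists_minor_ne_zero (k := fun i ↦ label u v w (T i))
    (a := fun i ↦ shortX (T i - P)) (b := fun i ↦ shortY (T i - P))
    (fun i j hij ↦ hTinj (hS.injOn (hts (hT i)) (hts (hT j)) hij)) (fun i ↦ shortY_sq (hT0 i))
    fun hX hY ↦ absurd (hTinj (sub_left_injective (ext_short (hT0 1) (hT0 0) hX hY))) (by decide)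
  exact ⟨T ∘ e, fun i ↦ hT (e i), he⟩

variable {D : K} {s : PlaceFun K} (h : HasBoundedLocalModels (shortA W) (shortB W) D s)
include h

lemma pointHeight_le (hts : t ⊆ S) (ht : t.card = 4) {H : ℝ} (hH : ∀ Q ∈ t, pointHeight D Q ≤ H)
    {P : W.toAffine.Point} (hP : P ∈ S) :
    pointHeight D P ≤ 50 * (placeSum s + 3 * H + 4 * ℓ) := by
  classical
  obtain ⟨Q, hQ, hne⟩ := hS.exists_minor_sub_ne_zero hts ht (P := 0)
    fun h0 ↦ hS.ne_zero 0 (hts h0) rfl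
  simp only [sub_zero] at hne
  have hQS (i) := hts (hQ i)
  have hbound := pointHeight_le_of_isCoplanar h (hS.ne_zero P hP) (fun i ↦ hS.ne_zero _ (hQS i))
    (isCoplanar_label u v w P Q) hne
  simp only [Fin.sum_univ_three] at hbound
  linarith [hH _ (hQ 0), hH _ (hQ 1), hH _ (hQ 2), hS.logHeight_le P hP,
    hS.logHeight_le _ (hQS 0), hS.logHeight_le _ (hQS 1), hS.logHeight_le _ (hQS 2)]

lemma pointHeight_le_of_pointHeight_sub_le [DecidableEq K] (hts : t ⊆ S) (ht : t.card = 4)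
    {P : W.toAffine.Point} (hP : P ∈ S) (hPt : P ∉ t) {H : ℝ}
    (hH : ∀ Q ∈ t, pointHeight D (Q - P) ≤ H) :
    pointHeight D P ≤ 300 * (placeSum s + 3 * H + 4 * ℓ) := by
  obtain ⟨Q, hQ, hne⟩ := hS.exists_minor_sub_ne_zero hts ht hPt
  have hQS (i) := hts (hQ i)
  have hcop := isCoplanar_label u v w P Q
  have hbound := pointHeight_le_of_isCoplanar_add h (hS.ne_zero P hP) (Q := fun i ↦ Q i - P)
    (fun i ↦ sub_ne_zero.mpr fun hQP ↦ hPt (hQP ▸ hQ i))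
    (by simpa only [add_sub_cancel] using hcop) hne
  simp only [Fin.sum_univ_three] at hbound
  linarith [hH _ (hQ 0), hH _ (hQ 1), hH _ (hQ 2), hS.logHeight_le P hP,
    hS.logHeight_le _ (hQS 0), hS.logHeight_le _ (hQS 1), hS.logHeight_le _ (hQS 2)]

end IsLabelled

end Labelling

section Counting

open Height

variable {K : Type*} [Field K] [CharZero K] {W : WeierstrassCurve K}

lemma card_filter_shortX_eq_le_two [DecidableEq K] {t : Finset W.toAffine.Point} (ht : 0 ∉ t)
    (x : K) : (t.filter fun P ↦ shortX P = x).card ≤ 2 := by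
  by_contra! hcard
  obtain ⟨P, Q, R, hP, hQ, hR, hPQ, hPR, hQR⟩ := Finset.two_lt_card_iff.mp hcard
  simp only [Finset.mem_filter] at hP hQ hR
  have hne {T} (hT : T ∈ t) : T ≠ 0 := fun h ↦ ht (h ▸ hT)
  have hPQ' := (eq_or_eq_neg_of_shortX_eq (hne hP.1) (hne hQ.1) (hP.2.trans hQ.2.symm)).resolve_left
    hPQ
  have hPR' := (eq_or_eq_neg_of_shortX_eq (hne hP.1) (hne hR.1) (hP.2.trans hR.2.symm)).resolve_left
    hPR
  exact hQR (neg_injective (hPQ'.symm.trans hPR'))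

lemma card_filter_pow_div_eq_le {F : Type*} [Field F] [DecidableEq F] {n : ℕ} (hn : 0 < n) {D : F}
    (hD : D ≠ 0) (s : Finset F) (z : F) : (s.filter fun x ↦ x ^ n / D = z).card ≤ n := by
  have hsub : (s.filter fun x ↦ x ^ n / D = z) ⊆ (Polynomial.nthRoots n (z * D)).toFinset := by
    intro x hx
    rw [Multiset.mem_toFinset, Polynomial.mem_nthRoots hn, ← (Finset.mem_filter.mp hx).2,
      div_mul_cancel₀ _ hD]
  exact (Finset.card_le_card hsub).trans <|
    (Multiset.toFinset_card_le _).trans (Polynomial.card_nthRoots n _)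

variable [AdmissibleAbsValues K]

lemma exists_forall_card_le_of_pointHeight_le [Northcott (logHeight₁ (K := K))] (c : ℝ) :
    ∃ m : ℕ, ∀ (W : WeierstrassCurve K) (D : K), D ≠ 0 → ∀ t : Finset W.toAffine.Point,
      (∀ P ∈ t, pointHeight D P ≤ c) → t.card ≤ m := by
  classical
  have hfin : {z : K | logHeight₁ z ≤ 6 * c}.Finite := Northcott.finite_le _
  refine ⟨12 * hfin.toFinset.card + 1, fun W D hD t ht ↦ ?_⟩
  have hmaps : ∀ x ∈ (t.erase 0).image shortX, x ^ 6 / D ∈ hfin.toFinset :=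
    Finset.forall_mem_image.mpr fun P hP ↦ by
      have hPc := ht P (Finset.mem_of_mem_erase hP)
      rw [pointHeight_eq] at hPc
      rw [Set.Finite.mem_toFinset]
      change logHeight₁ _ ≤ _
      linarith
  have hpoints := Finset.card_le_mul_card_image (f := shortX) (t.erase 0) 2
    fun x _ ↦ card_filter_shortX_eq_le_two (Finset.notMem_erase 0 t) x
  have hcoords := Finset.card_le_mul_card_image_of_maps_to hmaps 6
    fun z _ ↦ card_filter_pow_div_eq_le (by norm_num) hD _ z
  have herase := Finset.pred_card_le_card_erase (s := t) (a := 0)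
  lia

end Counting

section Growth

open Filter Asymptotics Real

lemma exists_forall_le_of_le_mul_log_add_one_pow (a : ℝ) (n : ℕ) :
    ∃ N₀ : ℕ, ∀ N : ℕ, (N : ℝ) ≤ a * (log N + 1) ^ n → N ≤ N₀ := by
  have hlog : (fun x : ℝ ↦ log x + 1) =O[atTop] log :=
    (isBigO_refl _ _).add isLittleO_const_log_atTop.isBigO
  have hpow : (fun x : ℝ ↦ a * (log x + 1) ^ n) =o[atTop] id :=
    ((hlog.pow n).trans_isLittleO isLittleO_pow_log_id_atTop).const_mul_left a
  obtain ⟨x₀, hx₀⟩ := eventually_atTop.mp <|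
    (hpow.bound (c := 1 / 2) (by norm_num)).and (eventually_gt_atTop 0)
  refine ⟨⌈x₀⌉₊, fun N hN ↦ ?_⟩
  by_contra! hlt
  obtain ⟨hle, hpos⟩ := hx₀ N ((Nat.le_ceil x₀).trans (by exact_mod_cast hlt.le))
  rw [id, norm_eq_abs, norm_eq_abs, abs_of_pos hpos] at hle
  linarith [le_abs_self (a * (log N + 1) ^ n)]

lemma two_mul_ceil_add_three_pow_le {r R : ℕ} (hr : r ≤ R) {E : ℝ} (hE : 0 ≤ E) :
    ((2 * (⌈r * E⌉₊ + 1) + 1 : ℕ) : ℝ) ^ r ≤ (2 * R * E + 5) ^ R := by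
  have hceil := (Nat.ceil_lt_add_one (by positivity : 0 ≤ r * E)).le
  have hrR : r * E ≤ R * E := by gcongr
  calc ((2 * (⌈r * E⌉₊ + 1) + 1 : ℕ) : ℝ) ^ r ≤ (2 * R * E + 5) ^ r := by
        gcongr; push_cast; linarith
    _ ≤ (2 * R * E + 5) ^ R :=
        pow_le_pow_right₀ (by linarith [show 0 ≤ R * E by positivity]) hr

end Growth

lemma exists_subset_card_eq_forall_le {α β : Type*} [LinearOrder β] [Nonempty β] (f : α → β)
    (S : Finset α) {n : ℕ} (hn : n ≤ S.card) :
    ∃ t ⊆ S, t.card = n ∧ ∃ c, (∀ p ∈ t, f p ≤ c) ∧ ∀ q ∈ S, q ∉ t → c ≤ f q := by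
  classical
  induction n with
  | zero =>
    obtain ⟨c, hc⟩ := (S.image f).exists_le (α := βᵒᵈ)
    exact ⟨∅, by simp, by simp, c, by simp, fun q hq _ ↦ hc _ (Finset.mem_image_of_mem f hq)⟩
  | succ n ih =>
    obtain ⟨t, hts, htn, c, htc, hc⟩ := ih (Nat.le_of_succ_le hn)
    have hne : (S \ t).Nonempty := by
      rw [← Finset.card_pos, Finset.card_sdiff_of_subset hts]; lia
    obtain ⟨p, hp, hmin⟩ := Finset.exists_min_image _ f hne
    obtain ⟨hpS, hpt⟩ := Finset.mem_sdiff.mp hp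
    refine ⟨insert p t, Finset.insert_subset hpS hts, by rw [Finset.card_insert_of_notMem hpt, htn],
      f p, Finset.forall_mem_insert _ _ _ |>.mpr
        ⟨le_rfl, fun q hq ↦ (htc q hq).trans (hc p hpS hpt)⟩,
      fun q hq hqt ↦ hmin q (Finset.mem_sdiff.mpr ⟨hq, fun h ↦ hqt (Finset.mem_insert_of_mem h)⟩)⟩

section Bound

open Height Real

universe u

variable {K : Type u} [Field K] [CharZero K] [AdmissibleAbsValues K] [DecidableEq K]

namespace IsLabelled

variable {W : WeierstrassCurve K} {D : K} {s : PlaceFun K} {u v w : K}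
  {S : Finset W.toAffine.Point} {ℓ : ℝ} [FiniteDimensional ℚ (ℚ ⊗[ℤ] W.toAffine.Point)]

-- By packing, some five of the points differ by points of height less than `H / 1000`, up to
-- constants; as the labels determine `P` from such differences, its height is small too.
lemma le_of_forall_le_pointHeight (hS : IsLabelled S u v w ℓ)
    (h : HasBoundedLocalModels (shortA W) (shortB W) D s) {T : Finset W.toAffine.Point}
    (hTS : T ⊆ S) {H : ℝ} (hH : 0 ≤ H) (hℓ : 0 ≤ ℓ) (hlow : ∀ P ∈ T, H ≤ pointHeight D P)
    (hup : ∀ P ∈ T, pointHeight D P ≤ 50 * (placeSum s + 3 * H + 4 * ℓ))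
    (hcard : (2 * (1000 * (grpRank W.toAffine.Point + 1)) + 1) ^ grpRank W.toAffine.Point * 4 <
      T.card) :
    H ≤ 200000 * (placeSum s + ℓ + 1) := by
  have hs := h.placeSum_nonneg
  set r := grpRank W.toAffine.Point
  set E := 50 * (placeSum s + 3 * H + 4 * ℓ) + 100 * placeSum s + 1
  obtain ⟨t, htT, htc, ht⟩ := (isAlmostQuadratic_pointHeight h).exists_subset_apply_sub_le
    (pointHeight_nonneg D) (D := E) (by positivity) (fun P hP ↦ by linarith [hup P hP])
    (by positivity) hcard
  obtain ⟨P, hP⟩ : t.Nonempty := Finset.card_pos.mp (Nat.zero_lt_of_lt htc)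
  obtain ⟨t', ht', ht'c⟩ := Finset.exists_subset_card_eq
    (show 4 ≤ (t.erase P).card by rw [Finset.card_erase_of_mem hP]; lia)
  have hclose := hS.pointHeight_le_of_pointHeight_sub_le h
    (ht'.trans ((t.erase_subset P).trans (htT.trans hTS))) ht'c (hTS (htT hP))
    (fun hP' ↦ Finset.notMem_erase P t (ht' hP'))
    fun Q hQ ↦ ht Q (Finset.mem_of_mem_erase (ht' hQ)) P hP
  have hdiff : r * E / ((1000 * (r + 1) : ℕ) : ℝ) ^ 2 ≤ E / 1000000 := by
    have hE0 : 0 ≤ E := by positivity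
    rw [div_le_div_iff₀ (by positivity) (by norm_num)]
    push_cast
    nlinarith [mul_nonneg hE0 (Nat.cast_nonneg (α := ℝ) r),
      mul_nonneg hE0 (sq_nonneg (r : ℝ))]
  linarith [hlow P (htT hP)]

lemma pointHeight_le_of_lt_card (hS : IsLabelled S u v w ℓ)
    (h : HasBoundedLocalModels (shortA W) (shortB W) D s) (hℓ : 0 ≤ ℓ)
    (hcard : (2 * (1000 * (grpRank W.toAffine.Point + 1)) + 1) ^ grpRank W.toAffine.Point * 4 + 4 <
      S.card) {P : W.toAffine.Point} (hP : P ∈ S) :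
    pointHeight D P ≤ 40000000 * (placeSum s + ℓ + 1) := by
  obtain ⟨t, htS, htc, H, htH, hH⟩ :=
    exists_subset_card_eq_forall_le (pointHeight D) S (n := 4) (by lia)
  obtain ⟨Q, hQ⟩ : t.Nonempty := Finset.card_pos.mp (by lia)
  have hup (P) (hP : P ∈ S) := hS.pointHeight_le h htS htc htH hP
  have hHle : H ≤ 200000 * (placeSum s + ℓ + 1) :=
    hS.le_of_forall_le_pointHeight h (T := S \ t) Finset.sdiff_subset
      ((pointHeight_nonneg D Q).trans (htH Q hQ)) hℓ
      (fun P hP ↦ hH P (Finset.mem_sdiff.mp hP).1 (Finset.mem_sdiff.mp hP).2)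
      (fun P hP ↦ hup P (Finset.mem_sdiff.mp hP).1)
      (by rw [Finset.card_sdiff_of_subset htS]; lia)
  linarith [hup P hP, h.placeSum_nonneg]

end IsLabelled

variable [Northcott (logHeight₁ (K := K))]

lemma exists_card_le_of_isLabelled (c : ℝ) (R d : ℕ) :
    ∃ N₀ : ℕ, ∀ (W : WeierstrassCurve K) (D : K) (s : PlaceFun K), D ≠ 0 →
      HasBoundedLocalModels (shortA W) (shortB W) D s → placeSum s ≤ c →
      FiniteDimensional ℚ (ℚ ⊗[ℤ] W.toAffine.Point) → grpRank W.toAffine.Point ≤ R →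
      ∀ (S : Finset W.toAffine.Point) (u v w : K), IsLabelled S u v w (d * log S.card) →
        S.card ≤ N₀ := by
  obtain ⟨m, hm⟩ := exists_forall_card_le_of_pointHeight_le (K := K) (1 + 100 * c)
  set b := 50000000 * (c + d + 1)
  obtain ⟨N₁, hN₁⟩ := exists_forall_le_of_le_mul_log_add_one_pow ((2 * R * b + 5) ^ R * m) R
  refine ⟨max N₁ ((2 * (1000 * (R + 1)) + 1) ^ R * 4 + 4), fun W D s hD h hs _ hR S u v w hS ↦ ?_⟩
  by_contra! hlt
  obtain ⟨hlt₁, hlt₂⟩ := max_lt_iff.mp hlt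
  refine hlt₁.not_ge (hN₁ _ ?_)
  have hs0 := h.placeSum_nonneg
  have hlog : 0 ≤ log S.card := log_natCast_nonneg _
  have hd : (0 : ℝ) ≤ d := d.cast_nonneg
  have hb0 : 0 < b := by linarith
  have hheight (P) (hP : P ∈ S) : pointHeight D P + 100 * placeSum s ≤ b * (log S.card + 1) := by
    have := hS.pointHeight_le_of_lt_card h (by positivity) (hlt₂.trans_le' (by gcongr; lia)) hP
    nlinarith [mul_nonneg (hs0.trans hs) hlog, mul_nonneg hd hlog]
  have hcount := (isAlmostQuadratic_pointHeight h).card_le_mul_of_apply_add_le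
    (pointHeight_nonneg D) (by positivity) hheight fun t ht ↦ hm W D hD t fun P hP ↦
      (ht P hP).trans (by gcongr)
  calc (S.card : ℝ)
      ≤ (2 * R * (b * (log S.card + 1)) + 5) ^ R * m := by
        refine (Nat.cast_le.mpr hcount).trans ?_
        simp only [Nat.cast_mul, Nat.cast_pow]
        gcongr
        exact two_mul_ceil_add_three_pow_le hR (by positivity)
    _ ≤ ((2 * R * b + 5) * (log S.card + 1)) ^ R * m := by gcongr; linarith
    _ = (2 * R * b + 5) ^ R * m * (log S.card + 1) ^ R := by
        rw [mul_pow, mul_right_comm]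

end Bound

/-! ### Local models in terms of the `j`-invariant -/

section LocalModels

open Height Real AdmissibleAbsValues NumberField

universe w

lemma norm_completion_add_le_max {K : Type*} [Field K] {v : AbsoluteValue K ℝ}
    (hv : IsNonarchimedean v) (a b : v.Completion) : ‖a + b‖ ≤ max ‖a‖ ‖b‖ := by
  refine UniformSpace.Completion.induction_on₂ a b
    (isClosed_le (by fun_prop) (by fun_prop)) fun x y ↦ ?_
  rw [← UniformSpace.Completion.coe_add]
  simp only [UniformSpace.Completion.norm_coe]
  exact hv _ _

lemma exists_isAlgClosed_ultrametric_extension {K : Type w} [Field K] {v : AbsoluteValue K ℝ}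
    (hv : IsNonarchimedean v) (hnontriv : ∃ x, 1 < v x) :
    ∃ (L : Type w) (_ : NormedField L) (ι : K →+* L), IsAlgClosed L ∧ (∀ x, ‖ι x‖ = v x) ∧
      IsQuasiUltrametric L 1 := by
  let C := v.Completion
  let toC : K →+* C :=
    UniformSpace.Completion.coeRingHom.comp (WithAbs.equiv v).symm.toRingHom
  have norm_toC (x : K) : ‖toC x‖ = v x := UniformSpace.Completion.norm_coe _
  have : IsUltrametricDist C :=
    .isUltrametricDist_of_forall_norm_add_le_max_norm (norm_completion_add_le_max hv)
  let _ : NontriviallyNormedField C :=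
    { (inferInstance : NormedField C) with
      non_trivial := hnontriv.imp' toC fun x hx ↦ hx.trans_eq (norm_toC x).symm }
  let L := AlgebraicClosure C
  refine ⟨L, spectralNorm.normedField C L, (algebraMap C L).comp toC, inferInstance, fun x ↦ ?_,
    @IsQuasiUltrametric.mk L (spectralNorm.normedField C L) 1 le_rfl fun a b ↦ ?_⟩
  · exact (spectralNorm_extends (toC x)).trans (norm_toC x)
  · rw [one_mul]
    exact isNonarchimedean_spectralNorm (K := C) (L := L) a b

lemma isQuasiUltrametric_two (L : Type*) [NormedField L] : IsQuasiUltrametric L 2 where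
  one_le := one_le_two
  norm_add_le_mul_max a b := by
    linarith [norm_add_le a b, le_max_left ‖a‖ ‖b‖, le_max_right ‖a‖ ‖b‖]

section Bounds

variable {K : Type*} [Field K] [AdmissibleAbsValues K]

open Classical in
variable (K) in
/-- The logarithm of a constant `c` with `|x + y|_v ≤ c max(|x|_v, |y|_v)`: it is `0` at the
nonarchimedean places and `log 2` elsewhere. -/
noncomputable def logTriangleConst : PlaceFun K where
  val v := if v ∈ nonarchAbsVal (K := K) then 0 else log 2
  property := by
    refine Set.finite_empty.subset fun v hv ↦ ?_
    simp at hv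

lemma logTriangleConst_nonneg (v : AbsoluteValue K ℝ) : 0 ≤ (logTriangleConst K).1 v := by
  simp only [logTriangleConst]
  split_ifs
  exacts [le_rfl, log_nonneg one_le_two]

/-- A bound for the local models of the curves with `j`-invariant `j`. The last two constants are
`A³ / Δ` and `B² / Δ` for the curve `y² = x³ + Ax + B`. -/
noncomputable def jBound (j : K) : PlaceFun K :=
  logTriangleConst K + posLogAbs (1 / 3) + posLogAbs (-j / 110592) +
    posLogAbs ((j - 1728) / 746496)

end Bounds

lemma j_mul_Δ {F : Type*} [Field F] (W : WeierstrassCurve F) [W.IsElliptic] :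
    W.j * W.Δ = W.c₄ ^ 3 := by
  rw [WeierstrassCurve.j, ← WeierstrassCurve.coe_Δ', mul_right_comm, Units.inv_mul, one_mul]

section IsBounded

variable {K : Type w} [Field K] [CharZero K]

section ShortCoefficients

variable (W : WeierstrassCurve K) [W.IsElliptic]

lemma shortA_pow_three : shortA W ^ 3 = -W.j / 110592 * W.Δ := by
  rw [shortA]
  linear_combination 1 / 110592 * j_mul_Δ W

lemma shortB_sq : shortB W ^ 2 = (W.j - 1728) / 746496 * W.Δ := by
  rw [shortB]
  linear_combination -1 / 746496 * j_mul_Δ W + 1 / 746496 * W.c_relation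

end ShortCoefficients

namespace LocalModel

lemma one_le_pow_mul_norm_ι_neg_quarter {v : AbsoluteValue K ℝ} {D : K}
    (E : LocalModel v D) {M : ℝ} [IsQuasiUltrametric E.L M] :
    1 ≤ M ^ 10 * ‖E.ι (-1 / 4)‖ := by
  have hM : 1 ≤ M := IsQuasiUltrametric.one_le E.L
  have norm_two : ‖(2 : E.L)‖ ≤ M := by
    simpa [one_add_one_eq_two] using
      IsQuasiUltrametric.norm_add_le_mul_max (M := M) (1 : E.L) 1
  have four_mul : (2 : E.L) ^ 2 * E.ι (-1 / 4) = -1 := by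
    rw [← map_ofNat E.ι, ← map_pow, ← map_mul, ← map_one E.ι, ← map_neg]
    norm_num
  calc 1 = ‖(2 : E.L)‖ ^ 2 * ‖E.ι (-1 / 4)‖ := by
        rw [← norm_pow, ← norm_mul, four_mul, norm_neg, norm_one]
    _ ≤ M ^ 2 * ‖E.ι (-1 / 4)‖ := by gcongr
    _ ≤ M ^ 10 * ‖E.ι (-1 / 4)‖ := by gcongr; norm_num

variable {v : AbsoluteValue K ℝ} {W : WeierstrassCurve K} [W.IsElliptic] (E : LocalModel v W.Δ)

lemma scale_shortA_pow_three : E.scale 4 (shortA W) ^ 3 = E.ι (-W.j / 110592) := by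
  calc E.scale 4 (shortA W) ^ 3 = E.ι (shortA W ^ 3) * E.μ ^ 12 := by rw [scale, map_pow]; ring
    _ = E.ι (-W.j / 110592) * (E.μ ^ 12 * E.ι W.Δ) := by
        rw [shortA_pow_three, map_mul]; ring
    _ = E.ι (-W.j / 110592) := by rw [E.μ_pow_mul, mul_one]

lemma scale_shortB_sq : E.scale 6 (shortB W) ^ 2 = E.ι ((W.j - 1728) / 746496) := by
  calc E.scale 6 (shortB W) ^ 2 = E.ι (shortB W ^ 2) * E.μ ^ 12 := by rw [scale, map_pow]; ring
    _ = E.ι ((W.j - 1728) / 746496) * (E.μ ^ 12 * E.ι W.Δ) := by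
        rw [shortB_sq, map_mul]; ring
    _ = E.ι ((W.j - 1728) / 746496) := by rw [E.μ_pow_mul, mul_one]

lemma four_mul_disc_scale :
    4 * (4 * E.scale 4 (shortA W) ^ 3 + 27 * E.scale 6 (shortB W) ^ 2) = E.ι (-1 / 4) := by
  rw [scale_shortA_pow_three, scale_shortB_sq]
  simp only [← map_ofNat E.ι, ← map_mul, ← map_add]
  congr 1
  ring

lemma isBounded_of_posLogAbs_le [AdmissibleAbsValues K] {m : ℝ} [IsQuasiUltrametric E.L (exp m)]
    (h_third : (posLogAbs (1 / 3 : K)).1 v ≤ m) (hA : (posLogAbs (-W.j / 110592)).1 v ≤ m)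
    (hB : (posLogAbs ((W.j - 1728) / 746496)).1 v ≤ m) :
    E.IsBounded (shortA W) (shortB W) (exp m) where
  isQuasiUltrametric := ‹_›
  norm_A := .of_pow three_ne_zero (E.scale_shortA_pow_three ▸ (E.normLePow_ι hA).mono (by decide))
  norm_B := .of_pow two_ne_zero (E.scale_shortB_sq ▸ (E.normLePow_ι hB).mono (by decide))
  one_le_mul_norm_three := by
    have hthird := E.normLePow_ι h_third
    rw [NormLePow, pow_one] at hthird
    calc (1 : ℝ) = ‖E.ι (1 / 3)‖ * ‖(3 : E.L)‖ := by
          rw [← norm_mul, ← map_ofNat E.ι, ← map_mul, div_mul_cancel₀ _ three_ne_zero, map_one,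
            norm_one]
      _ ≤ exp m * ‖(3 : E.L)‖ := by gcongr
  one_le_mul_norm_disc := by
    rw [four_mul_disc_scale]
    exact E.one_le_pow_mul_norm_ι_neg_quarter

end LocalModel

end IsBounded

variable {K : Type} [Field K] [NumberField K]

lemma exists_one_lt_of_isFinitePlace {v : AbsoluteValue K ℝ} (hv : IsFinitePlace v) :
    ∃ x, 1 < v x := by
  obtain ⟨p, rfl⟩ := hv
  obtain ⟨x, hx, hx0⟩ := Submodule.exists_mem_ne_zero_of_ne_bot p.ne_bot
  refine ⟨(algebraMap _ K x)⁻¹, ?_⟩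
  rw [map_inv₀, one_lt_inv₀ (AbsoluteValue.pos _ (by simpa using hx0))]
  exact (FinitePlace.norm_lt_one_iff_mem (K := K) p x).mpr hx

lemma exists_isAlgClosed_extension {v : AbsoluteValue K ℝ} (hv : IsPlace v) :
    ∃ (L : Type) (_ : NormedField L) (ι : K →+* L), IsAlgClosed L ∧ (∀ x, ‖ι x‖ = v x) ∧
      IsQuasiUltrametric L (exp ((logTriangleConst K).1 v)) := by
  by_cases hna : v ∈ nonarchAbsVal (K := K)
  · simp only [logTriangleConst, hna, if_true, exp_zero]
    exact exists_isAlgClosed_ultrametric_extension (AdmissibleAbsValues.isNonarchimedean v hna)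
      (exists_one_lt_of_isFinitePlace hna)
  · obtain ⟨φ, rfl⟩ := mem_multisetInfinitePlace.mp (hv.resolve_right hna)
    simp only [logTriangleConst, hna, if_false, exp_log two_pos]
    exact ⟨ℂ, inferInstance, φ, inferInstance, fun _ ↦ rfl, isQuasiUltrametric_two ℂ⟩

lemma exists_localModel {v : AbsoluteValue K ℝ} (hv : IsPlace v) {D : K} (hD : D ≠ 0) :
    ∃ E : LocalModel v D, IsQuasiUltrametric E.L (exp ((logTriangleConst K).1 v)) := by
  obtain ⟨L, _, ι, _, norm_ι, hL⟩ := exists_isAlgClosed_extension hv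
  have hιD : (ι D)⁻¹ * ι D = 1 := inv_mul_cancel₀ ((map_ne_zero ι).mpr hD)
  obtain ⟨μ, hμ⟩ := IsAlgClosed.exists_pow_nat_eq (ι D)⁻¹ (n := 12) (by simp)
  exact ⟨⟨L, ι, μ, norm_ι, hμ ▸ hιD⟩, hL⟩

lemma hasBoundedLocalModels_jBound (W : WeierstrassCurve K) [W.IsElliptic] :
    HasBoundedLocalModels (shortA W) (shortB W) W.Δ (jBound W.j) := by
  intro v hv
  obtain ⟨E, hE⟩ := exists_localModel hv W.isUnit_Δ.ne_zero
  have hsum : (jBound W.j).1 v = (logTriangleConst K).1 v + (posLogAbs (1 / 3 : K)).1 v +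
      (posLogAbs (-W.j / 110592)).1 v + (posLogAbs ((W.j - 1728) / 746496)).1 v := rfl
  have hc := logTriangleConst_nonneg (K := K) v
  have h₁ := posLogAbs_nonneg (1 / 3 : K) v
  have h₂ := posLogAbs_nonneg (-W.j / 110592) v
  have h₃ := posLogAbs_nonneg ((W.j - 1728) / 746496) v
  have := hE.mono (exp_le_exp.mpr (show _ ≤ (jBound W.j).1 v by linarith))
  exact ⟨E, E.isBounded_of_posLogAbs_le (by linarith) (by linarith) (by linarith)⟩

end LocalModels

/-! ### Finiteness of Selmer groups -/

section SelmerGroup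

open IsDedekindDomain

@[to_additive]
lemma finite_quotient_of_inv_mul_mem {G ι : Type*} [Group G] [Finite ι] {H : Subgroup G} (f : G → ι)
    (hf : ∀ x y, f x = f y → x⁻¹ * y ∈ H) : Finite (G ⧸ H) := by
  refine Finite.of_injective (fun q ↦ f q.out) fun a b hab ↦ ?_
  rw [← QuotientGroup.out_eq' a, ← QuotientGroup.out_eq' b]
  exact QuotientGroup.eq.mpr (hf _ _ hab)

variable {R K : Type*} [CommRing R] [IsDedekindDomain R] [Field K] [Algebra R K]
  [IsFractionRing R K] {n : ℕ}

lemma valuationOfNeZeroMod_mk_eq_one_iff (p : HeightOneSpectrum R) (x : Kˣ) :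
    p.valuationOfNeZeroMod n (QuotientGroup.mk x) = 1 ↔
      ∃ γ, p.valuation K (x : K) = γ ^ n := by
  have mem_zmultiples : p.valuationOfNeZeroMod n (QuotientGroup.mk x) = 1 ↔
      (p.valuationOfNeZero x).toAdd ∈ AddSubgroup.zmultiples (n : ℤ) :=
    ((Int.quotientZMultiplesNatEquivZMod n).toMultiplicative.map_eq_one_iff).trans
      (QuotientGroup.eq_one_iff _)
  rw [mem_zmultiples, Int.mem_zmultiples_iff, ← p.valuationOfNeZero_eq]
  constructor
  · rintro ⟨k, hk⟩
    refine ⟨WithZero.exp k, ?_⟩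
    rw [← WithZero.exp_nsmul, nsmul_eq_mul, ← hk]
    rfl
  · rintro ⟨γ, hγ⟩
    have hlog := congrArg WithZero.log hγ
    rw [WithZero.log_pow, nsmul_eq_mul] at hlog
    exact ⟨γ.log, hlog⟩

lemma exists_span_singleton_eq_pow {r : R} (hr : r ≠ 0)
    (h : ∀ p : HeightOneSpectrum R, ∃ γ, p.intValuation r = γ ^ n) :
    ∃ J : Ideal R, Ideal.span {r} = J ^ n := by
  have hspan : Associates.mk (Ideal.span {r}) ≠ 0 := by simpa using hr
  have dvd_count (q : Associates (Ideal R)) (hq : Irreducible q) :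
      n ∣ q.count (Associates.mk (Ideal.span {r})).factors := by
    obtain ⟨I, rfl⟩ := Associates.mk_surjective q
    have hI : Prime I := (Associates.irreducible_mk.mp hq).prime
    let p : HeightOneSpectrum R := ⟨I, Ideal.isPrime_of_prime hI, hI.ne_zero⟩
    obtain ⟨γ, hγ⟩ := h p
    rw [p.intValuation_if_neg hr] at hγ
    have hlog := congrArg WithZero.log hγ
    rw [WithZero.log_exp, WithZero.log_pow, nsmul_eq_mul] at hlog
    rw [← Int.natCast_dvd_natCast]
    exact dvd_neg.mp ⟨γ.log, hlog⟩
  obtain ⟨J, hJ⟩ := Associates.is_pow_of_dvd_count hspan dvd_count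
  obtain ⟨J, rfl⟩ := Associates.mk_surjective J
  exact ⟨J, associated_iff_eq.mp (Associates.mk_eq_mk_iff_associated.mp
    (hJ.trans (Associates.mk_pow J n).symm))⟩

variable (R) in
lemma exists_algebraMap_eq_mul_pow (x : Kˣ) (hn : n ≠ 0) :
    ∃ (r : R) (z : Kˣ), algebraMap R K r = x * z ^ n := by
  obtain ⟨a, b, hb, hx⟩ := IsFractionRing.div_surjective (A := R) (x : K)
  have hbK : algebraMap R K b ≠ 0 := by simpa using nonZeroDivisors.ne_zero hb
  refine ⟨a * b ^ (n - 1), .mk0 _ hbK, ?_⟩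
  rw [← hx, Units.val_mk0, map_mul, map_pow, ← mul_pow_sub_one hn]
  field_simp

variable (R) in
lemma exists_span_singleton_eq_pow_of_mem_selmerGroup (hn : n ≠ 0) {x : Kˣ}
    (hx : (QuotientGroup.mk x) ∈ selmerGroup (R := R) (K := K) (S := ∅) (n := n)) :
    ∃ (r : R) (z : Kˣ) (J : Ideal R), algebraMap R K r = x * z ^ n ∧ Ideal.span {r} = J ^ n ∧
      J ≠ 0 := by
  obtain ⟨r, z, hrz⟩ := exists_algebraMap_eq_mul_pow R x hn
  have hr : r ≠ 0 := by
    rintro rfl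
    exact (x * z ^ n).ne_zero (by simpa using hrz.symm)
  obtain ⟨J, hJ⟩ := exists_span_singleton_eq_pow (n := n) hr fun p ↦ by
    obtain ⟨γ, hγ⟩ := (valuationOfNeZeroMod_mk_eq_one_iff p x).mp (hx p (Set.notMem_empty p))
    refine ⟨γ * p.valuation K (z : K), (p.valuation_of_algebraMap (K := K) r).symm.trans ?_⟩
    change p.valuation K (algebraMap R K r) = _
    rw [hrz, map_mul, map_pow, hγ, mul_pow]
  refine ⟨r, z, J, hrz, hJ, ?_⟩
  rintro rfl
  rw [zero_pow hn] at hJ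
  exact hr (by simpa using hJ)

variable (R K) in
lemma exists_map_classGroup_of_selmerGroup (hn : n ≠ 0) :
    ∃ f : selmerGroup (R := R) (K := K) (S := ∅) (n := n) → ClassGroup R,
      ∀ x y, f x = f y → x⁻¹ * y ∈ (selmerGroup.fromUnit (R := R) (K := K) (n := n)).range := by
  choose x hx using fun q : selmerGroup (R := R) (K := K) (S := ∅) (n := n) ↦
    QuotientGroup.mk_surjective q.1
  choose r z J hrz hJ hJ0 using fun q ↦
    exists_span_singleton_eq_pow_of_mem_selmerGroup R hn ((hx q).symm ▸ q.2)
  refine ⟨fun q ↦ ClassGroup.mk0 ⟨J q, mem_nonZeroDivisors_of_ne_zero (hJ0 q)⟩, fun q q' h ↦ ?_⟩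
  obtain ⟨c, d, hc, hd, hcd⟩ := ClassGroup.mk0_eq_mk0_iff.mp h
  have hspan : Ideal.span {c ^ n * r q} = Ideal.span {d ^ n * r q'} := by
    simp only [← Ideal.span_singleton_mul_span_singleton, ← Ideal.span_singleton_pow, hJ,
      ← mul_pow]
    exact congrArg (· ^ n) hcd
  obtain ⟨u, hu⟩ := Ideal.span_singleton_eq_span_singleton.mp hspan
  have hcK : algebraMap R K c ≠ 0 := by simpa using hc
  have hdK : algebraMap R K d ≠ 0 := by simpa using hd
  refine ⟨u, Subtype.ext ?_⟩
  change QuotientGroup.mk _ = q.1⁻¹ * q'.1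
  rw [← hx q, ← hx q', ← QuotientGroup.mk_inv, ← QuotientGroup.mk_mul, QuotientGroup.eq]
  refine ⟨.mk0 _ hcK * z q * (.mk0 _ hdK * z q')⁻¹, Units.ext ?_⟩
  have huK := congrArg (algebraMap R K) hu
  simp only [map_mul, map_pow, hrz] at huK
  simp only [mul_inv_rev, powMonoidHom_apply, Units.val_pow_eq_pow_val, Units.val_mul,
    Units.val_mk0, Units.val_inv_eq_inv_val, RingHom.toMonoidHom_eq_coe, Units.coe_map,
    MonoidHom.coe_coe, mul_pow, inv_pow]
  field_simp
  linear_combination huK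

lemma finite_selmerGroup [Finite (ClassGroup R)] [Group.FG Rˣ] {S : Set (HeightOneSpectrum R)}
    (hS : S.Finite) (hn : n ≠ 0) : Finite (selmerGroup (R := R) (K := K) (S := S) (n := n)) := by
  have : NeZero n := ⟨hn⟩
  have : Fact (0 < n) := ⟨Nat.pos_of_ne_zero hn⟩
  have finite_units : Finite (selmerGroup.fromUnit (R := R) (K := K) (n := n)).range := by
    have := Subgroup.finiteIndex_range_powMonoidHom_of_fg Rˣ hn
    rw [← selmerGroup.fromUnit_ker (K := K)] at this
    exact Finite.of_equiv _ (QuotientGroup.quotientKerEquivRange _).toEquiv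
  have finite_unramified : Finite (selmerGroup (R := R) (K := K) (S := ∅) (n := n)) := by
    obtain ⟨f, hf⟩ := exists_map_classGroup_of_selmerGroup R K hn
    have := finite_quotient_of_inv_mul_mem f hf
    exact .of_subgroup_quotient (selmerGroup.fromUnit (R := R) (K := K) (n := n)).range
  have : Finite S := hS
  let val := selmerGroup.valuation (R := R) (K := K) (S := S) (n := n)
  have finite_ker : Finite val.ker := by
    rw [selmerGroup.valuation_ker_eq]
    exact Finite.of_injective
      (fun q ↦ (⟨q.1.1, q.2⟩ : selmerGroup (R := R) (K := K) (S := ∅) (n := n)))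
      fun q q' h ↦ Subtype.ext (Subtype.ext (Subtype.mk.inj h))
  exact .of_subgroup_quotient val.ker

end SelmerGroup

/-! ### The Mordell–Weil theorem -/

section TwoDivisibility

variable {F : Type*} [Field F]

/-- The cubic `X³ + AX + B` of the short Weierstrass model of `W` has the three distinct roots
`e 0`, `e 1`, `e 2`, expressed by Vieta's formulas. -/
structure IsShortCubicRoots (W : WeierstrassCurve F) (e : Fin 3 → F) : Prop where
  injective : Function.Injective e
  sum_eq_zero : e 0 + e 1 + e 2 = 0
  shortA_eq : shortA W = e 0 * e 1 + e 0 * e 2 + e 1 * e 2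
  shortB_eq : shortB W = -(e 0 * e 1 * e 2)

namespace IsShortCubicRoots

variable {W : WeierstrassCurve F} {e : Fin 3 → F} {P Q : W.toAffine.Point}

lemma cubic_eq (h : IsShortCubicRoots W e) (i : Fin 3) (x : F) :
    x ^ 3 + shortA W * x + shortB W = (x - e i) * (x - e (i + 1)) * (x - e (i + 2)) := by
  rw [h.shortA_eq, h.shortB_eq]
  fin_cases i <;>
  · simp only [Fin.zero_eta, Fin.mk_one, Fin.reduceFinMk, Fin.reduceAdd, zero_add]
    linear_combination x ^ 2 * h.sum_eq_zero

variable [CharZero F]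

lemma isElliptic (h : IsShortCubicRoots W e) : W.IsElliptic := by
  have hne {i k : Fin 3} (hik : i ≠ k) : e i - e k ≠ 0 := sub_ne_zero.mpr (h.injective.ne hik)
  have hΔ : W.Δ = 16 * ((e 0 - e 1) * (e 0 - e 2) * (e 1 - e 2)) ^ 2 := by
    rw [Δ_eq_shortA_shortB, h.shortA_eq, h.shortB_eq, eq_neg_of_add_eq_zero_right h.sum_eq_zero]
    ring
  refine ⟨isUnit_iff_ne_zero.mpr (hΔ ▸ mul_ne_zero (by norm_num) (pow_ne_zero 2 ?_))⟩
  exact mul_ne_zero (mul_ne_zero (hne (by decide)) (hne (by decide))) (hne (by decide))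

lemma exists_shortX_sub_eq_sq (h : IsShortCubicRoots W e) (hP : P ≠ 0)
    (hsq : ∀ i, IsSquare (shortX P - e i)) :
    ∃ r : Fin 3 → F, (∀ i, e i = shortX P - r i ^ 2) ∧ shortY P = r 0 * r 1 * r 2 := by
  choose r hr using fun i ↦ isSquare_iff_exists_sq _ |>.mp (hsq i)
  have hY : shortY P ^ 2 = (r 0 * r 1 * r 2) ^ 2 := by
    rw [shortY_sq hP, h.cubic_eq 0, mul_pow, mul_pow, ← hr, ← hr, ← hr]
    rfl
  rcases sq_eq_sq_iff_eq_or_eq_neg.mp hY with hY | hY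
  · exact ⟨r, fun i ↦ by rw [← hr, sub_sub_cancel], hY⟩
  · refine ⟨-r, fun i ↦ by rw [Pi.neg_apply, neg_sq, ← hr, sub_sub_cancel], ?_⟩
    simp only [Pi.neg_apply, hY]
    ring

variable [DecidableEq F]

lemma exists_eq_add_self (h : IsShortCubicRoots W e) (hP : P ≠ 0)
    (hsq : ∀ i, IsSquare (shortX P - e i)) : ∃ T : W.toAffine.Point, P = T + T := by
  have := h.isElliptic
  obtain ⟨r, hr, hYr⟩ := h.exists_shortX_sub_eq_sq hP hsq
  have add_ne_zero {i k : Fin 3} (hik : i ≠ k) : r i + r k ≠ 0 := fun h0 ↦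
    h.injective.ne hik (by linear_combination hr i - hr k - (r i - r k) * h0)
  have hsum := h.sum_eq_zero
  have hA := h.shortA_eq
  have hB := h.shortB_eq
  simp only [hr] at hsum hA hB
  have hX : shortX P = (r 0 ^ 2 + r 1 ^ 2 + r 2 ^ 2) / 3 := by linear_combination hsum / 3
  obtain ⟨T, hT, hTX, hTY⟩ := exists_short_eq (W := W)
    (X := shortX P + r 0 * r 1 + r 0 * r 2 + r 1 * r 2)
    (Y := (r 0 + r 1) * (r 0 + r 2) * (r 1 + r 2)) (by rw [hA, hB, hX]; ring)
  have hTY0 : shortY T ≠ 0 := by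
    rw [hTY]
    exact mul_ne_zero (mul_ne_zero (add_ne_zero (by decide)) (add_ne_zero (by decide)))
      (add_ne_zero (by decide))
  have slope_eq : (3 * shortX T ^ 2 + shortA W) / (2 * shortY T) = r 0 + r 1 + r 2 := by
    rw [div_eq_iff (mul_ne_zero two_ne_zero hTY0), hTX, hTY, hA, hX]
    ring
  have hX_eq : shortX P = shortX (T + T) := by
    rw [shortX_add_self hT hTY0, slope_eq, hTX]
    linear_combination hsum
  refine ⟨T, ext_short hP (add_self_ne_zero_of_shortY_ne_zero hT hTY0) hX_eq ?_⟩
  rw [shortY_add_self hT hTY0, slope_eq, ← hX_eq, hTX, hTY, hYr]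
  ring

end IsShortCubicRoots

variable [CharZero F] [DecidableEq F] {W : WeierstrassCurve F} {P Q : W.toAffine.Point}

lemma isSquare_shortX_sub_mul_shortX_add_sub (hP : P ≠ 0) (hQ : Q ≠ 0)
    (hX : shortX P ≠ shortX Q) {e : F} (he : e ^ 3 + shortA W * e + shortB W = 0) :
    IsSquare ((shortX P - e) * (shortX Q - e) * (shortX (P + Q) - e)) := by
  obtain ⟨m, hm⟩ : ∃ m, m = (shortY P - shortY Q) / (shortX P - shortX Q) := ⟨_, rfl⟩
  have hd : shortX P - shortX Q ≠ 0 := sub_ne_zero.mpr hX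
  have hYQ : shortY Q = shortY P - m * (shortX P - shortX Q) := by
    rw [hm]
    field_simp
    ring
  have hP_eq := shortY_sq hP
  have hQ_eq := shortY_sq hQ
  rw [hYQ] at hQ_eq
  refine isSquare_iff_exists_sq _ |>.mpr ⟨m * (e - shortX P) + shortY P, ?_⟩
  rw [shortX_add hP hQ hX, ← hm]
  refine mul_left_cancel₀ hd ?_
  linear_combination (shortX Q - e) * hP_eq - (shortX P - e) * hQ_eq -
    (shortX P - shortX Q) * he

lemma IsShortCubicRoots.exists_add_eq_add_self {e : Fin 3 → F} (h : IsShortCubicRoots W e)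
    (hP : P ≠ 0) (hQ : Q ≠ 0) (hX : shortX P ≠ shortX Q)
    (hPe : ∀ i, shortX P ≠ e i) (hQe : ∀ i, shortX Q ≠ e i)
    (hsq : ∀ i, IsSquare ((shortX P - e i) * (shortX Q - e i))) :
    ∃ T : W.toAffine.Point, P + Q = T + T := by
  refine h.exists_eq_add_self (add_ne_zero_of_shortX_ne hX) fun i ↦ ?_
  have hprod := isSquare_shortX_sub_mul_shortX_add_sub hP hQ hX (e := e i)
    (by rw [h.cubic_eq i]; ring)
  have hne : (shortX P - e i) * (shortX Q - e i) ≠ 0 :=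
    mul_ne_zero (sub_ne_zero.mpr (hPe i)) (sub_ne_zero.mpr (hQe i))
  rw [← mul_div_cancel_left₀ (shortX (P + Q) - e i) hne]
  exact hprod.div (hsq i)

end TwoDivisibility

section WeakMordellWeil

open IsDedekindDomain

lemma isSquare_valuation_of_sq_eq_mul {K Γ : Type*} [Field K] [LinearOrderedCommGroupWithZero Γ]
    (v : Valuation K Γ) {a b c y : K} (ha : a ≠ 0) (hy : y ^ 2 = a * b * c)
    (hab : v (a - b) = 1) (hac : v (a - c) = 1) : IsSquare (v a) := by
  have hva : v a ≠ 0 := v.ne_zero_iff.mpr ha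
  have hvy : v y ^ 2 = v a * v b * v c := by rw [← map_pow, hy, map_mul, map_mul]
  rcases lt_trichotomy (v a) 1 with hlt | heq | hgt
  · have eq_one {d : K} (hd : v (a - d) = 1) : v d = 1 := by
      rw [← sub_sub_cancel a d, v.map_sub_eq_of_lt_right (hlt.trans_eq hd.symm), hd]
    rw [eq_one hab, eq_one hac, mul_one, mul_one] at hvy
    exact ⟨v y, by rw [← hvy, sq]⟩
  · rw [heq]
    exact .one
  · have eq_self {d : K} (hd : v (a - d) = 1) : v d = v a := by
      rw [← sub_sub_cancel a d, v.map_sub_eq_of_lt_left (hd.trans_lt hgt)]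
    rw [eq_self hab, eq_self hac] at hvy
    refine ⟨v y / v a, ?_⟩
    rw [div_mul_div_comm, ← sq, hvy]
    field_simp

variable (R : Type*) {K : Type*} [CommRing R] [IsDedekindDomain R] [Field K] [Algebra R K]
  [IsFractionRing R K]

/-- The primes at which some difference of two of the `e i` is not a unit. -/
def badPrimes (e : Fin 3 → K) : Set (HeightOneSpectrum R) :=
  {p | ∃ i k, i ≠ k ∧ p.valuation K (e i - e k) ≠ 1}

lemma finite_setOf_valuation_ne_one {x : K} (hx : x ≠ 0) :
    {p : HeightOneSpectrum R | p.valuation K x ≠ 1}.Finite := by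
  refine ((HeightOneSpectrum.Support.finite R x).union
    (HeightOneSpectrum.Support.finite R x⁻¹)).subset fun p hp ↦ ?_
  rcases lt_or_gt_of_ne hp with hlt | hgt
  · refine .inr (?_ : 1 < p.valuation K x⁻¹)
    rw [map_inv₀]
    exact (one_lt_inv₀ (zero_lt_iff.mpr ((p.valuation K).ne_zero_iff.mpr hx))).mpr hlt
  · exact .inl hgt

lemma finite_badPrimes {e : Fin 3 → K} (he : Function.Injective e) : (badPrimes R e).Finite := by
  have hfin (i k : Fin 3) (hik : i ≠ k) := finite_setOf_valuation_ne_one R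
    (sub_ne_zero.mpr (he.ne hik))
  refine (Set.finite_iUnion fun i ↦ Set.finite_iUnion fun k ↦
    Set.finite_iUnion fun hik ↦ hfin i k hik).subset ?_
  rintro p ⟨i, k, hik, hp⟩
  exact Set.mem_iUnion_of_mem i (Set.mem_iUnion₂_of_mem hik hp)

namespace IsShortCubicRoots

variable [CharZero K] {W : WeierstrassCurve K} {e : Fin 3 → K} {P Q : W.toAffine.Point}

lemma mk_shortX_sub_mem_selmerGroup (h : IsShortCubicRoots W e) (hP : P ≠ 0) {i : Fin 3}
    (hi : shortX P ≠ e i) :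
    QuotientGroup.mk (Units.mk0 _ (sub_ne_zero.mpr hi)) ∈
      selmerGroup (R := R) (K := K) (S := badPrimes R e) (n := 2) := by
  intro p hp
  have valuation_eq {k : Fin 3} (hik : i ≠ k) :
      p.valuation K (shortX P - e i - (shortX P - e k)) = 1 := by
    rw [sub_sub_sub_cancel_left]
    exact of_not_not fun hne ↦ hp ⟨k, i, hik.symm, hne⟩
  rw [valuationOfNeZeroMod_mk_eq_one_iff, ← isSquare_iff_exists_sq]
  exact isSquare_valuation_of_sq_eq_mul _ (sub_ne_zero.mpr hi)
    ((shortY_sq hP).trans (h.cubic_eq i _)) (valuation_eq (by simp)) (valuation_eq (by simp))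

open scoped Classical in
/-- The 2-descent map: the classes of the `X - e i` modulo squares, with the value `none` at
infinity and where `X - e i` vanishes. -/
noncomputable def descentClass (h : IsShortCubicRoots W e) (P : W.toAffine.Point) :
    Option (Fin 3 → Option (selmerGroup (R := R) (K := K) (S := badPrimes R e) (n := 2))) :=
  if hP : P = 0 then none else some fun i ↦
    if hi : shortX P = e i then none else some ⟨_, h.mk_shortX_sub_mem_selmerGroup R hP hi⟩

variable {R}

lemma zero_of_descentClass_eq (h : IsShortCubicRoots W e)
    (hPQ : h.descentClass R P = h.descentClass R Q) (hP : P = 0) : Q = 0 := by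
  by_contra hQ
  simp [descentClass, hP, hQ] at hPQ

lemma shortX_eq_of_descentClass_eq (h : IsShortCubicRoots W e) (hP : P ≠ 0)
    (hPQ : h.descentClass R P = h.descentClass R Q) {i : Fin 3} (hi : shortX P = e i) :
    shortX Q = e i := by
  have hQ : Q ≠ 0 := fun hQ ↦ hP (h.zero_of_descentClass_eq hPQ.symm hQ)
  simp only [descentClass, hP, hQ, dite_false, Option.some.injEq] at hPQ
  by_contra hi'
  simpa [hi, hi'] using congrFun hPQ i

lemma isSquare_of_descentClass_eq (h : IsShortCubicRoots W e) (hP : P ≠ 0)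
    (hPQ : h.descentClass R P = h.descentClass R Q) {i : Fin 3} (hi : shortX P ≠ e i) :
    IsSquare ((shortX P - e i) * (shortX Q - e i)) := by
  have hQ : Q ≠ 0 := fun hQ ↦ hP (h.zero_of_descentClass_eq hPQ.symm hQ)
  have hi' : shortX Q ≠ e i := fun hi' ↦ hi (h.shortX_eq_of_descentClass_eq hQ hPQ.symm hi')
  simp only [descentClass, hP, hQ, dite_false, Option.some.injEq] at hPQ
  have hclass := congrFun hPQ i
  simp only [hi, hi', dite_false, Option.some.injEq, Subtype.mk.injEq] at hclass
  obtain ⟨z, hz⟩ := QuotientGroup.eq.mp hclass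
  have hzK : (z : K) ^ 2 = (shortX P - e i)⁻¹ * (shortX Q - e i) := by
    simpa using congrArg Units.val hz
  have hne := sub_ne_zero.mpr hi
  refine ⟨(shortX P - e i) * z, ?_⟩
  rw [mul_mul_mul_comm, ← sq (z : K), hzK]
  field_simp

variable [DecidableEq K]

lemma exists_sub_eq_add_self_of_descentClass_eq (h : IsShortCubicRoots W e)
    (hPQ : h.descentClass R P = h.descentClass R Q) : ∃ T : W.toAffine.Point, P - Q = T + T := by
  by_cases hP : P = 0
  · exact ⟨0, by simp [hP, h.zero_of_descentClass_eq hPQ hP]⟩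
  have hQ : Q ≠ 0 := fun hQ ↦ hP (h.zero_of_descentClass_eq hPQ.symm hQ)
  by_cases hX : shortX P = shortX Q
  · rcases eq_or_eq_neg_of_shortX_eq hP hQ hX with rfl | rfl
    · exact ⟨0, by simp⟩
    · exact ⟨-Q, by abel⟩
  have hPe (i : Fin 3) : shortX P ≠ e i := fun hi ↦
    hX (hi.trans (h.shortX_eq_of_descentClass_eq hP hPQ hi).symm)
  have hQe (i : Fin 3) : shortX Q ≠ e i := fun hi ↦
    hPe i (h.shortX_eq_of_descentClass_eq hQ hPQ.symm hi)
  obtain ⟨T, hT⟩ := h.exists_add_eq_add_self hP hQ hX hPe hQe fun i ↦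
    h.isSquare_of_descentClass_eq hP hPQ (hPe i)
  refine ⟨T - Q, ?_⟩
  rw [eq_sub_of_add_eq hT]
  abel

variable (R) in
lemma finiteIndex_range_two_nsmul [Finite (ClassGroup R)] [Group.FG Rˣ]
    (h : IsShortCubicRoots W e) :
    (nsmulAddMonoidHom (α := W.toAffine.Point) 2).range.FiniteIndex := by
  have := finite_selmerGroup (K := K) (finite_badPrimes R h.injective) two_ne_zero
  have := finite_quotient_of_neg_add_mem (H := (nsmulAddMonoidHom 2).range) (h.descentClass R)
    fun P Q hPQ ↦ by
      obtain ⟨T, hT⟩ := h.exists_sub_eq_add_self_of_descentClass_eq hPQ.symm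
      exact ⟨T, by rw [nsmulAddMonoidHom_apply, two_nsmul, ← hT]; abel⟩
  exact AddSubgroup.finiteIndex_of_finite_quotient

end IsShortCubicRoots

end WeakMordellWeil

section MordellWeil

open Height NumberField

lemma exists_isShortCubicRoots_map {F L : Type*} [Field F] [CharZero F] [Field L] [Algebra F L]
    (W : WeierstrassCurve F) [W.IsElliptic]
    (hL : (((⟨1, 0, shortA W, shortB W⟩ : Cubic F).toPoly).map (algebraMap F L)).Splits) :
    ∃ e, IsShortCubicRoots (W.map (algebraMap F L)) e := by
  classical
  set C : Cubic F := ⟨1, 0, shortA W, shortB W⟩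
  have ha : C.a ≠ 0 := one_ne_zero
  obtain ⟨e₁, e₂, e₃, hroots⟩ := (Cubic.splits_iff_roots_eq_three ha).mp hL
  have hdiscr : C.discr ≠ 0 := by
    intro hzero
    have hΔ := Δ_eq_shortA_shortB W
    simp only [Cubic.discr, C] at hzero
    exact W.isUnit_Δ.ne_zero (by linear_combination hΔ + 16 * hzero)
  obtain ⟨h₁₂, h₁₃, h₂₃⟩ := (Cubic.discr_ne_zero_iff_roots_ne ha hroots).mp hdiscr
  have hb := Cubic.b_eq_three_roots ha hroots
  have hc := Cubic.c_eq_three_roots ha hroots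
  have hd := Cubic.d_eq_three_roots ha hroots
  simp only [C, map_one, one_mul, map_zero] at hb hc hd
  refine ⟨![e₁, e₂, e₃], ?_, ?_, ?_, ?_⟩
  · intro i k hik
    fin_cases i <;> fin_cases k <;> simp_all
  · exact neg_eq_zero.mp hb.symm
  · exact (shortA_map W _).trans hc
  · exact (shortB_map W _).trans hd

variable {K : Type} [Field K] [NumberField K]

lemma northcott_pointHeight (W : WeierstrassCurve K) {D : K} (hD : D ≠ 0) :
    Northcott (pointHeight D (W := W)) := by
  refine ⟨fun c ↦ not_not.mp fun hinf ↦ ?_⟩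
  obtain ⟨m, hm⟩ := exists_forall_card_le_of_pointHeight_le (K := K) c
  obtain ⟨t, ht, hcard⟩ := Set.Infinite.exists_subset_card_eq hinf (m + 1)
  have := hm W D hD t fun P hP ↦ ht hP
  omega

variable [DecidableEq K]

lemma IsShortCubicRoots.fg_point {W : WeierstrassCurve K} {e : Fin 3 → K}
    (h : IsShortCubicRoots W e) : AddGroup.FG W.toAffine.Point := by
  have := h.isElliptic
  have := northcott_pointHeight W W.isUnit_Δ.ne_zero
  have : Group.FG (𝓞 K)ˣ := Group.fg_iff_monoid_fg.mpr inferInstance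
  exact AddCommGroup.fg_of_descent' (h.finiteIndex_range_two_nsmul (𝓞 K)) (pointHeight_nonneg W.Δ)
    (isAlmostQuadratic_pointHeight (hasBoundedLocalModels_jBound W))

theorem fg_point (W : WeierstrassCurve K) [W.IsElliptic] : AddGroup.FG W.toAffine.Point := by
  classical
  let L := (⟨1, 0, shortA W, shortB W⟩ : Cubic K).toPoly.SplittingField
  have : NumberField L := .of_module_finite K L
  obtain ⟨e, he⟩ := exists_isShortCubicRoots_map W (L := L) (Polynomial.SplittingField.splits _)
  have : Module.Finite ℤ (W.map (algebraMap K L)).toAffine.Point :=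
    Module.Finite.iff_addGroup_fg.mpr he.fg_point
  let ι : W.toAffine.Point →+ (W.map (algebraMap K L)).toAffine.Point :=
    WeierstrassCurve.Affine.Point.map (W' := W) (Algebra.ofId K L)
  exact Module.Finite.iff_addGroup_fg.mp <| .of_injective ι.toIntLinearMap <|
    WeierstrassCurve.Affine.Point.map_injective (W' := W) (Algebra.ofId K L)

end MordellWeil

/-! ### Arithmetic progressions -/

section Progression

open Height Real

lemma logHeight₁_natCast_le (K : Type*) [Field K] [AdmissibleAbsValues K] (n : ℕ) :
    logHeight₁ (n : K) ≤ totalWeight K * log n := by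
  simpa using logHeight₁_sum_le (Finset.range n) fun _ ↦ (1 : K)

lemma exists_label_eq {F : Type*} [Field F] [CharZero F] {W : WeierstrassCurve F}
    {N : ℕ} {x y : Fin N → F} (h : ∀ i, W.toAffine.Nonsingular (x i) (y i))
    (hap : IsNontrivAP x ∨ IsNontrivAP y) :
    ∃ u v w : F, ∀ i, label u v w (.some _ _ (h i) : W.toAffine.Point) = ((i + 1 : ℕ) : F) := by
  rcases hap with ⟨a, b, hb, hab⟩ | ⟨a, b, hb, hab⟩
  · refine ⟨0, 1 / b, -(a + W.b₂ / 12) / b, fun i ↦ ?_⟩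
    simp only [label, shortX, hab i]
    field_simp
    ring
  · refine ⟨1 / b, -W.a₁ / (2 * b), (W.a₁ * W.b₂ / 24 - W.a₃ / 2 - a) / b, fun i ↦ ?_⟩
    simp only [label, shortX, shortY, hab i]
    field_simp
    ring

lemma exists_isLabelled {K : Type*} [Field K] [CharZero K] [AdmissibleAbsValues K]
    {W : WeierstrassCurve K} {N : ℕ} {x y : Fin N → K}
    (h : ∀ i, W.toAffine.Nonsingular (x i) (y i)) (hap : IsNontrivAP x ∨ IsNontrivAP y) :
    ∃ (S : Finset W.toAffine.Point) (u v w : K), S.card = N ∧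
      IsLabelled S u v w (totalWeight K * log N) := by
  classical
  obtain ⟨u, v, w, hlabel⟩ := exists_label_eq h hap
  let P (i : Fin N) : W.toAffine.Point := .some _ _ (h i)
  have label_injective : Function.Injective (label u v w ∘ P) := fun i k hik ↦ by
    simp only [Function.comp_apply, P, hlabel, Nat.cast_inj] at hik
    lia
  refine ⟨Finset.univ.image P, u, v, w, ?_, ?_, ?_, ?_⟩
  · rw [Finset.card_image_of_injective _ label_injective.of_comp, Finset.card_fin]
  · simp [P]
  · rw [Finset.coe_image, Finset.coe_univ, Set.image_univ]
    exact label_injective.injOn_range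
  · refine Finset.forall_mem_image.mpr fun i _ ↦ ?_
    rw [hlabel]
    refine (logHeight₁_natCast_le K _).trans ?_
    gcongr
    exact i.2

end Progression

end ArithProgression

open ArithProgression in
theorem AP_bounded_of_rank_bounded_general {K : Type} [Field K] [NumberField K] [DecidableEq K]
    (j₀ : K) (R : ℕ)
    (hR : ∀ (W : WeierstrassCurve K) [W.IsElliptic], W.j = j₀ →
      grpRank W.toAffine.Point ≤ R) :
    ∃ N₀ : ℕ, ∀ (W : WeierstrassCurve K) [W.IsElliptic], W.j = j₀ →
      ∀ (N : ℕ) (x y : Fin N → K),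
        (∀ i, W.toAffine.Nonsingular (x i) (y i)) →
        (IsNontrivAP x ∨ IsNontrivAP y) →
        N ≤ N₀ := by
  obtain ⟨N₀, hN₀⟩ := exists_card_le_of_isLabelled (K := K) (placeSum (jBound j₀)) R
    (Height.totalWeight K)
  refine ⟨N₀, fun W _ hj N x y hns hap ↦ ?_⟩
  have : Module.Finite ℤ W.toAffine.Point := Module.Finite.iff_addGroup_fg.mpr (fg_point W)
  have hmodels := hasBoundedLocalModels_jBound W
  rw [hj] at hmodels
  obtain ⟨S, u, v, w, rfl, hS⟩ := exists_isLabelled hns hap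
  exact hN₀ W W.Δ _ W.isUnit_Δ.ne_zero hmodels le_rfl inferInstance (hR W hj) S u v w hS

/-- If the ranks of elliptic curves over `ℚ` with `j`-invariant `j₀` are uniformly bounded,
then there is `N₀ = N₀(j₀)` bounding the length of every non-trivial arithmetic progression
in the `x`-coordinates (or `y`-coordinates) of rational points of any elliptic curve over `ℚ`
with `j`-invariant `j₀`. -/
theorem AP_bounded_of_rank_bounded (j₀ : ℚ)
    (R : ℕ)
    (hR : ∀ (W : WeierstrassCurve ℚ) [W.IsElliptic], W.j = j₀ →
      grpRank W.toAffine.Point ≤ R) :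
    ∃ N₀ : ℕ, ∀ (W : WeierstrassCurve ℚ) [W.IsElliptic], W.j = j₀ →
      ∀ (N : ℕ) (x y : Fin N → ℚ),
        (∀ i, W.toAffine.Nonsingular (x i) (y i)) →
        (IsNontrivAP x ∨ IsNontrivAP y) →
        N ≤ N₀ :=
  AP_bounded_of_rank_bounded_general j₀ R hR
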